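/- arXiv:2010.14614 — 4 statements merged into one kernel-verified Lean document; each statement's English description precedes it below -/
import Mathlib

section
/- Let α < 0, γ < 0 and β ∈ ℝ, and let (u,v) be a regular solution of the Schrödinger–Korteweg–de Vries system with these parameters. Let p₁, q₁, p₂ satisfy q₁ > 0, p₂ > 1 and 0 < p₁ ≤ 2/(p₂+2), and define λ₁(t) = t^{p₁}/(log t)^{q₁} and η(t) = t^{1−p₁}·(log t)^{1+q₁}. Then for every l > 0 the iterated integral ∫_{10}^{∞} (1/(η(t)·λ₁(t))) · ( ∫_ℝ ( |∂ₓu(t,x)|² + (∂ₓv(t,x))² ) · sech(x/(l·λ₁(t))) dx ) dt is finite. -/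
open MeasureTheory Filter

/-- A regular solution of the Schrödinger–Korteweg–de Vries system
    `i ∂ₜu + ∂ₓ²u = α u v + β u |u|²`,
    `∂ₜv + ∂ₓ³v + v ∂ₓv = γ ∂ₓ(|u|²)`:
    `u, v` are smooth in `(t,x)`, Schwartz in `x` for each fixed `t`, satisfy the
    equations pointwise, and have uniformly-in-time bounded `H¹ₓ` norms. -/
def IsSKdVSolution (α β γ : ℝ) (u : ℝ → ℝ → ℂ) (v : ℝ → ℝ → ℝ) : Prop :=
  ContDiff ℝ (⊤ : ℕ∞) (fun p : ℝ × ℝ => u p.1 p.2) ∧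
  ContDiff ℝ (⊤ : ℕ∞) (fun p : ℝ × ℝ => v p.1 p.2) ∧
  (∀ t : ℝ, ∃ f : SchwartzMap ℝ ℂ, ∀ x, f x = u t x) ∧
  (∀ t : ℝ, ∃ g : SchwartzMap ℝ ℝ, ∀ x, g x = v t x) ∧
  (∀ t x : ℝ,
    Complex.I * deriv (fun s => u s x) t + iteratedDeriv 2 (u t) x
      = (α : ℂ) * u t x * (v t x : ℂ) + (β : ℂ) * u t x * (‖u t x‖ : ℂ) ^ 2) ∧
  (∀ t x : ℝ,
    deriv (fun s => v s x) t + iteratedDeriv 3 (v t) x + v t x * deriv (v t) x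
      = γ * deriv (fun y => ‖u t y‖ ^ 2) x) ∧
  (∃ C : ℝ, ∀ t : ℝ,
    (∫ x : ℝ, ‖u t x‖ ^ 2) + (∫ x : ℝ, ‖deriv (u t) x‖ ^ 2) +
      (∫ x : ℝ, (v t x) ^ 2) + (∫ x : ℝ, (deriv (v t) x) ^ 2) ≤ C)

/-!
Local conservation of momentum, plus a large multiple of the local conservation of the KdV mass,
reads `∂ₜm + ∂ₓ(∂ₓ²S + P) = 0`. For `α, γ < 0` the quadratic part of `P` is positive in `∂ₓu` and
`∂ₓv`, and the `L^∞` bounds given by `H¹` let the mass law absorb the remaining terms, so that `P`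
dominates `|∂ₓu|² + (∂ₓv)²`. Testing against `h(t) arctan(a(t) x)`, cut off at `|x| ~ 1 / b(t)`,
gives the virial identity `d/dt ∫ m W = ∫ m ∂ₜW + ∫ S ∂ₓ³W + ∫ P ∂ₓW`. Its last term contains
`h a ∫ P / (1 + (a x)²)`, whose weight dominates `sech(a x)`; when `a ~ t⁻ᵖ` and `h ~ tᵖ⁻¹` up to
logarithms and `p < 2 / 3`, one can choose `b` so that `∫ m W` is bounded and every other term is
integrable in time.
-/

open Set Topology
open scoped ContDiff

/-- The partial derivative `∂ₓF` of a curried function `F t x` of time and space. -/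
noncomputable def spaceDeriv {E : Type*} [NormedAddCommGroup E] [NormedSpace ℝ E]
    (F : ℝ → ℝ → E) (t x : ℝ) : E := deriv (F t) x

/-- The partial derivative `∂ₜF` of a curried function `F t x` of time and space. -/
noncomputable def timeDeriv {E : Type*} [NormedAddCommGroup E] [NormedSpace ℝ E]
    (F : ℝ → ℝ → E) (t x : ℝ) : E := deriv (fun s => F s x) t

local prefix:max "∂ₓ" => spaceDeriv
local prefix:max "∂ₜ" => timeDeriv

section MixedDerivatives

theorem continuous_slice {X Y E : Type*} [TopologicalSpace X] [TopologicalSpace Y]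
    [TopologicalSpace E] {F : X → Y → E} {s : Set X} (hF : ContinuousOn ↿F (s ×ˢ univ)) {t : X}
    (ht : t ∈ s) : Continuous (F t) :=
  continuousOn_univ.1 <| hF.comp (f := fun x : Y => (t, x)) (by fun_prop) fun _ hx => ⟨ht, hx⟩

variable {E : Type*} [NormedAddCommGroup E] [NormedSpace ℝ E] {F : ℝ → ℝ → E}

theorem hasDerivAt_space (hF : ContDiff ℝ ∞ ↿F) (t x : ℝ) : HasDerivAt (F t) (∂ₓ F t x) x :=
  ((show ContDiff ℝ ∞ (F t) by fun_prop).differentiable (by simp) x).hasDerivAt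

theorem hasDerivAt_time (hF : ContDiff ℝ ∞ ↿F) (t x : ℝ) :
    HasDerivAt (fun s => F s x) (∂ₜ F t x) t :=
  ((show ContDiff ℝ ∞ (fun s => F s x) by fun_prop).differentiable (by simp) t).hasDerivAt

theorem spaceDeriv_eq_fderiv {t x : ℝ} (hF : DifferentiableAt ℝ ↿F (t, x)) :
    ∂ₓ F t x = fderiv ℝ ↿F (t, x) (0, 1) :=
  (hF.hasFDerivAt.comp_hasDerivAt x ((hasDerivAt_const x t).prodMk (hasDerivAt_id' x))).deriv

theorem timeDeriv_eq_fderiv {t x : ℝ} (hF : DifferentiableAt ℝ ↿F (t, x)) :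
    ∂ₜ F t x = fderiv ℝ ↿F (t, x) (1, 0) :=
  (hF.hasFDerivAt.comp_hasDerivAt (f := fun s => (s, x)) t
    ((hasDerivAt_id' t).prodMk (hasDerivAt_const t x))).deriv

theorem uncurry_spaceDeriv (hF : ContDiff ℝ ∞ ↿F) :
    ↿(∂ₓ F) = fun p => fderiv ℝ ↿F p (0, 1) :=
  funext fun p => spaceDeriv_eq_fderiv (hF.differentiable (by simp) p)

theorem uncurry_timeDeriv (hF : ContDiff ℝ ∞ ↿F) :
    ↿(∂ₜ F) = fun p => fderiv ℝ ↿F p (1, 0) :=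
  funext fun p => timeDeriv_eq_fderiv (hF.differentiable (by simp) p)

theorem contDiff_spaceDeriv (hF : ContDiff ℝ ∞ ↿F) : ContDiff ℝ ∞ ↿(∂ₓ F) := by
  rw [uncurry_spaceDeriv hF]
  exact (hF.fderiv_right le_rfl).clm_apply contDiff_const

theorem timeDeriv_spaceDeriv (hF : ContDiff ℝ ∞ ↿F) : ∂ₜ (∂ₓ F) = ∂ₓ (∂ₜ F) := by
  have hd : ContDiff ℝ ∞ (fderiv ℝ ↿F) := hF.fderiv_right le_rfl
  have hdd : ∀ p, DifferentiableAt ℝ (fderiv ℝ ↿F) p := hd.differentiable (by simp)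
  have ht : ContDiff ℝ ∞ ↿(∂ₜ F) := by
    rw [uncurry_timeDeriv hF]; exact hd.clm_apply contDiff_const
  ext t x
  rw [timeDeriv_eq_fderiv ((contDiff_spaceDeriv hF).differentiable (by simp) _),
    spaceDeriv_eq_fderiv (ht.differentiable (by simp) _), uncurry_spaceDeriv hF,
    uncurry_timeDeriv hF, fderiv_clm_apply (hdd _) (differentiableAt_const _),
    fderiv_clm_apply (hdd _) (differentiableAt_const _)]
  have two_le : minSmoothness ℝ 2 ≤ ∞ := by
    rw [minSmoothness_of_isRCLikeNormedField]
    exact WithTop.coe_le_coe.2 (le_top : (2 : ℕ∞) ≤ ⊤)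
  simpa using (hF.contDiffAt.isSymmSndFDerivAt two_le).eq (1, 0) (0, 1)

theorem contDiff_slice {n : ℕ∞ω} {s : Set ℝ} (hF : ContDiffOn ℝ n ↿F (s ×ˢ univ)) {t : ℝ}
    (ht : t ∈ s) : ContDiff ℝ n (F t) :=
  contDiffOn_univ.1 <| hF.comp (f := fun x : ℝ => (t, x)) (by fun_prop) fun _ hx => ⟨ht, hx⟩

theorem differentiableAt_of_contDiffOn {s : Set ℝ} (hs : IsOpen s)
    (hF : ContDiffOn ℝ 1 ↿F (s ×ˢ univ)) {t : ℝ} (ht : t ∈ s) (x : ℝ) :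
    DifferentiableAt ℝ ↿F (t, x) :=
  (hF.differentiableOn one_ne_zero).differentiableAt
    ((hs.prod isOpen_univ).mem_nhds ⟨ht, mem_univ x⟩)

theorem hasDerivAt_time_of_contDiffOn {s : Set ℝ} (hs : IsOpen s)
    (hF : ContDiffOn ℝ 1 ↿F (s ×ˢ univ)) {t : ℝ} (ht : t ∈ s) (x : ℝ) :
    HasDerivAt (fun r => F r x) (∂ₜ F t x) t :=
  ((differentiableAt_of_contDiffOn hs hF ht x).comp (f := fun r => (r, x)) t
    (by fun_prop)).hasDerivAt

theorem continuousOn_timeDeriv {s : Set ℝ} (hs : IsOpen s)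
    (hF : ContDiffOn ℝ 1 ↿F (s ×ˢ univ)) : ContinuousOn ↿(∂ₜ F) (s ×ˢ univ) :=
  ((hF.continuousOn_fderiv_of_isOpen (hs.prod isOpen_univ) le_rfl).clm_apply
    (continuousOn_const (c := ((1, 0) : ℝ × ℝ)))).congr fun p hp =>
      timeDeriv_eq_fderiv (differentiableAt_of_contDiffOn hs hF hp.1 p.2)

theorem timeDeriv_eq_zero {s : Set ℝ} (hs : IsOpen s) {t x : ℝ} (ht : t ∈ s)
    (hF : ∀ r ∈ s, F r x = 0) : ∂ₜ F t x = 0 := by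
  have : (fun r => F r x) =ᶠ[𝓝 t] fun _ => 0 := by
    filter_upwards [hs.mem_nhds ht] with r hr using hF r hr
  simpa [timeDeriv] using this.deriv_eq

theorem hasDerivAt_integral_of_contDiffOn {s : Set ℝ} (hs : IsOpen s)
    (hF : ContDiffOn ℝ 1 ↿F (s ×ˢ univ)) {K : Set ℝ} (hK : IsCompact K)
    (hFK : ∀ t ∈ s, ∀ x ∉ K, F t x = 0) {t : ℝ} (ht : t ∈ s) :
    HasDerivAt (fun r => ∫ x, F r x) (∫ x, ∂ₜ F t x) t := by
  have hF' := continuousOn_timeDeriv hs hF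
  obtain ⟨ε, hε, hball⟩ := Metric.nhds_basis_closedBall.mem_iff.1 (hs.mem_nhds ht)
  obtain ⟨C, hC⟩ := ((isCompact_closedBall t ε).prod hK).exists_bound_of_continuousOn
    (hF'.mono (prod_mono hball (subset_univ _)))
  refine (hasDerivAt_integral_of_dominated_loc_of_deriv_le (bound := K.indicator fun _ => C)
    (Metric.closedBall_mem_nhds t hε) ?_ ?_ (continuous_slice hF' ht).aestronglyMeasurable
    ?_ ?_ ?_).2
  · filter_upwards [hs.mem_nhds ht] with r hr
    exact (continuous_slice hF.continuousOn hr).aestronglyMeasurable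
  · exact (continuous_slice hF.continuousOn ht).integrable_of_hasCompactSupport
      (HasCompactSupport.intro hK (hFK t ht))
  · refine Eventually.of_forall fun x r hr => ?_
    by_cases hx : x ∈ K
    · rw [indicator_of_mem hx]
      exact hC (r, x) ⟨hr, hx⟩
    · rw [indicator_of_notMem hx,
        timeDeriv_eq_zero hs (hball hr) fun r hr => hFK r hr x hx, norm_zero]
  · exact (integrable_indicator_iff hK.measurableSet).2 (integrableOn_const hK.measure_lt_top.ne)
  · exact Eventually.of_forall fun x r hr => hasDerivAt_time_of_contDiffOn hs hF (hball hr) x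

end MixedDerivatives

section ConservationLaw

theorem integral_deriv_mul {f w : ℝ → ℝ} (hf : ContDiff ℝ 1 f) (hw : ContDiff ℝ 1 w)
    (hc : HasCompactSupport w) : ∫ x, deriv f x * w x = -∫ x, f x * deriv w x := by
  have hf' := hf.continuous_deriv le_rfl
  have hw' := hw.continuous_deriv le_rfl
  rw [eq_neg_iff_add_eq_zero, add_comm, ← eq_neg_iff_add_eq_zero]
  exact integral_mul_deriv_eq_deriv_mul_of_integrable
    (fun x _ => (hf.differentiable one_ne_zero x).hasDerivAt)
    (fun x _ => (hw.differentiable one_ne_zero x).hasDerivAt)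
    ((hf.continuous.mul hw').integrable_of_hasCompactSupport hc.deriv.mul_left)
    ((hf'.mul hw.continuous).integrable_of_hasCompactSupport hc.mul_left)
    ((hf.continuous.mul hw.continuous).integrable_of_hasCompactSupport hc.mul_left)

/-- The one-dimensional local conservation law `∂ₜm + ∂ₓ(∂ₓ²S + P) = 0` with density `m`, whose
flux is split into a dispersive part `∂ₓ²S` and a remainder `P`. -/
structure IsConservationLaw (m S P : ℝ → ℝ → ℝ) : Prop where
  contDiff_density : ContDiff ℝ ∞ ↿m
  contDiff_dispersion : ContDiff ℝ ∞ ↿S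
  contDiff_flux : ContDiff ℝ ∞ ↿P
  law : ∀ t x, ∂ₜ m t x + ∂ₓ ∂ₓ ∂ₓ S t x + ∂ₓ P t x = 0

namespace IsConservationLaw

variable {m S P W : ℝ → ℝ → ℝ} {s K : Set ℝ} {t : ℝ}

theorem integral_timeDeriv_mul (hm : IsConservationLaw m S P) (hW : ContDiff ℝ ∞ (W t))
    (hc : HasCompactSupport (W t)) :
    ∫ x, ∂ₜ m t x * W t x = (∫ x, S t x * ∂ₓ ∂ₓ ∂ₓ W t x) + ∫ x, P t x * ∂ₓ W t x := by
  have hW' : ContDiff ℝ ∞ (∂ₓ W t) := (contDiff_infty_iff_deriv.1 hW).2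
  have hW'' : ContDiff ℝ ∞ (∂ₓ ∂ₓ W t) := (contDiff_infty_iff_deriv.1 hW').2
  have hS' := contDiff_spaceDeriv hm.contDiff_dispersion
  have hS'' := contDiff_spaceDeriv hS'
  have hS''' := contDiff_spaceDeriv hS''
  have hP' := contDiff_spaceDeriv hm.contDiff_flux
  have parts : ∀ {F G : ℝ → ℝ → ℝ}, ContDiff ℝ ∞ ↿F → ContDiff ℝ ∞ (G t) →
      HasCompactSupport (G t) → ∫ x, ∂ₓ F t x * G t x = -∫ x, F t x * ∂ₓ G t x :=
    fun hF hG hc => integral_deriv_mul (ContDiff.of_le (by fun_prop) (by simp))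
      (hG.of_le (by simp)) hc
  have integrable : ∀ {F : ℝ → ℝ → ℝ}, ContDiff ℝ ∞ ↿F → Integrable fun x => F t x * W t x :=
    fun {F} hF => (Continuous.mul (by fun_prop) hW.continuous).integrable_of_hasCompactSupport
      hc.mul_left
  calc ∫ x, ∂ₜ m t x * W t x
      = ∫ x, -(∂ₓ ∂ₓ ∂ₓ S t x * W t x + ∂ₓ P t x * W t x) :=
        integral_congr_ae (Eventually.of_forall fun x => by
          linear_combination W t x * hm.law t x)
    _ = -((∫ x, ∂ₓ ∂ₓ ∂ₓ S t x * W t x) + ∫ x, ∂ₓ P t x * W t x) := by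
        rw [integral_neg, integral_add (integrable hS''') (integrable hP')]
    _ = (∫ x, S t x * ∂ₓ ∂ₓ ∂ₓ W t x) + ∫ x, P t x * ∂ₓ W t x := by
        rw [parts hS'' hW hc, parts hS' hW' hc.deriv,
          parts hm.contDiff_dispersion hW'' hc.deriv.deriv, parts hm.contDiff_flux hW hc]
        ring

theorem hasDerivAt_integral_mul (hm : IsConservationLaw m S P) (hs : IsOpen s)
    (hW : ContDiffOn ℝ ∞ ↿W (s ×ˢ univ)) (hK : IsCompact K)
    (hWK : ∀ t ∈ s, ∀ x ∉ K, W t x = 0) (ht : t ∈ s) :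
    HasDerivAt (fun r => ∫ x, m r x * W r x)
      ((∫ x, m t x * ∂ₜ W t x) + (∫ x, S t x * ∂ₓ ∂ₓ ∂ₓ W t x) + ∫ x, P t x * ∂ₓ W t x) t := by
  have hW1 : ContDiffOn ℝ 1 ↿W (s ×ˢ univ) := hW.of_le (by simp)
  have hm1 : ContDiffOn ℝ 1 ↿m univ := (hm.contDiff_density.of_le (by simp)).contDiffOn
  have hc : HasCompactSupport (W t) := HasCompactSupport.intro hK (hWK t ht)
  have hc' : HasCompactSupport (∂ₜ W t) := HasCompactSupport.intro hK fun x hx =>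
    timeDeriv_eq_zero hs ht fun r hr => hWK r hr x hx
  have hm' : Continuous (∂ₜ m t) :=
    continuous_slice (continuousOn_timeDeriv isOpen_univ (by simpa using hm1)) (mem_univ t)
  have product_rule : ∀ x, ∂ₜ (fun t x => m t x * W t x) t x =
      ∂ₜ m t x * W t x + m t x * ∂ₜ W t x := fun x =>
    ((hasDerivAt_time hm.contDiff_density t x).mul
      (hasDerivAt_time_of_contDiffOn hs hW1 ht x)).deriv
  have hd := hasDerivAt_integral_of_contDiffOn hs
    (F := fun t x => m t x * W t x) ((hm1.mono (subset_univ _)).mul hW1) hK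
    (fun r hr x hx => by rw [hWK r hr x hx, mul_zero]) ht
  simp_rw [product_rule] at hd
  rw [integral_add, hm.integral_timeDeriv_mul (contDiff_slice hW ht) hc] at hd
  · rwa [add_assoc, add_comm]
  · exact (hm'.mul (continuous_slice hW.continuousOn ht)).integrable_of_hasCompactSupport
      hc.mul_left
  · exact ((contDiff_slice (hm1.mono (subset_univ _)) ht).continuous.mul
      (continuous_slice (continuousOn_timeDeriv hs hW1) ht)).integrable_of_hasCompactSupport
      hc'.mul_left

end IsConservationLaw

end ConservationLaw

section VirialProfile

/-- The Lorentzian `(1 + z²)⁻¹`, the derivative of `arctan` and the reference decay of all the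
weights below. -/
noncomputable def lorentzian (z : ℝ) : ℝ := (1 + z ^ 2)⁻¹

theorem lorentzian_pos (z : ℝ) : 0 < lorentzian z := by
  unfold lorentzian; positivity

theorem lorentzian_le_one (z : ℝ) : lorentzian z ≤ 1 :=
  inv_le_one_of_one_le₀ (by nlinarith [sq_nonneg z])

theorem abs_mul_lorentzian_le_one (z : ℝ) : |z| * lorentzian z ≤ 1 := by
  rw [lorentzian, ← div_eq_mul_inv, div_le_one (by positivity), ← sq_abs]
  nlinarith [sq_nonneg (|z| - 1), abs_nonneg z]

theorem continuous_lorentzian : Continuous lorentzian :=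
  Continuous.inv₀ (by fun_prop) fun z => by positivity

theorem integrable_lorentzian_comp_mul {k : ℝ} (hk : k ≠ 0) :
    Integrable fun x => lorentzian (k * x) :=
  integrable_inv_one_add_sq.comp_mul_left' hk

theorem integral_lorentzian_comp_mul {k : ℝ} (hk : 0 < k) :
    ∫ x, lorentzian (k * x) = Real.pi / k := by
  rw [Measure.integral_comp_mul_left, show ∫ x, lorentzian x = Real.pi from
    integral_univ_inv_one_add_sq, abs_of_pos (inv_pos.2 hk), smul_eq_mul, mul_comm, div_eq_mul_inv]

theorem inv_cosh_le_lorentzian (z : ℝ) : (Real.cosh z)⁻¹ ≤ 4 * lorentzian z := by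
  have hcosh : (1 + z ^ 2) / 4 ≤ Real.cosh z := by
    have hexp := Real.quadratic_le_exp_of_nonneg (abs_nonneg z)
    have hneg := Real.exp_pos (-|z|)
    rw [← Real.cosh_abs, Real.cosh_eq, ← sq_abs]
    linarith [abs_nonneg z]
  rw [lorentzian, ← div_eq_mul_inv, inv_le_comm₀ (Real.cosh_pos z) (by positivity), inv_div]
  exact hcosh

theorem hasDerivAt_lorentzian (z : ℝ) : HasDerivAt lorentzian (-2 * z * lorentzian z ^ 2) z := by
  have h : HasDerivAt (fun z : ℝ => 1 + z ^ 2) (2 * z) z := by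
    simpa using ((hasDerivAt_id' z).pow 2).const_add 1
  refine (h.inv (by positivity)).congr_deriv ?_
  simp only [lorentzian]
  field_simp

theorem exists_abs_le_mul_lorentzian {f : ℝ → ℝ} (hf : Continuous f) (hc : HasCompactSupport f) :
    ∃ C > 0, ∀ z, |f z| ≤ C * lorentzian z := by
  obtain ⟨C, hC⟩ := (hf.mul (by fun_prop : Continuous fun z : ℝ => 1 + z ^ 2)
    ).bounded_above_of_compact_support hc.mul_right
  refine ⟨max C 1, by positivity, fun z => ?_⟩
  rw [lorentzian, ← div_eq_mul_inv, le_div_iff₀ (by positivity)]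
  have h := hC z
  rw [Pi.mul_apply, norm_mul, Real.norm_eq_abs, Real.norm_of_nonneg (by positivity)] at h
  exact h.trans (le_max_left _ _)

theorem abs_iteratedDeriv_arctan_le {j : ℕ} (hj : j ≤ 3) (z : ℝ) :
    |iteratedDeriv j Real.arctan z| ≤ 10 := by
  have hd1 : deriv Real.arctan = lorentzian := by
    simp only [Real.deriv_arctan, one_div]; rfl
  have hd2 : deriv lorentzian = fun z => -2 * z * lorentzian z ^ 2 :=
    funext fun z => (hasDerivAt_lorentzian z).deriv
  have hd3 : deriv (fun z => -2 * z * lorentzian z ^ 2) z =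
      -2 * lorentzian z ^ 2 + 8 * (z * lorentzian z) ^ 2 * lorentzian z := by
    rw [(((hasDerivAt_id' z).const_mul (-2)).fun_mul ((hasDerivAt_lorentzian z).fun_pow 2)).deriv]
    push_cast; ring
  have hJ := (lorentzian_pos z).le
  have hJ1 := lorentzian_le_one z
  have hJ2 : lorentzian z ^ 2 ≤ 1 := pow_le_one₀ hJ hJ1
  have hzJ : |z * lorentzian z| ≤ 1 := by
    simpa [abs_mul, abs_of_nonneg hJ] using abs_mul_lorentzian_le_one z
  have hzJ2 : (z * lorentzian z) ^ 2 ≤ 1 := (sq_le_one_iff_abs_le_one _).2 hzJ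
  interval_cases j
  · rw [iteratedDeriv_zero, abs_le]
    constructor <;>
      linarith [Real.neg_pi_div_two_lt_arctan z, Real.arctan_lt_pi_div_two z, Real.pi_lt_four]
  · rw [iteratedDeriv_one, hd1, abs_of_nonneg hJ]
    linarith
  · rw [iteratedDeriv_succ, iteratedDeriv_one, hd1, hd2, abs_le]
    rw [abs_le] at hzJ
    constructor <;> nlinarith
  · rw [iteratedDeriv_succ, iteratedDeriv_succ, iteratedDeriv_one, hd1, hd2, hd3, abs_le]
    constructor <;> nlinarith [mul_nonneg (sq_nonneg (z * lorentzian z)) hJ,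
      mul_le_mul hzJ2 hJ1 hJ zero_le_one]

theorem abs_iteratedDeriv_mul_comp_le {f g : ℝ → ℝ} {n : ℕ} {A B a b x : ℝ} (hf : ContDiff ℝ n f)
    (hg : ContDiff ℝ n g) (ha : 0 ≤ a) (hb : 0 ≤ b)
    (hA : ∀ j ≤ n, |iteratedDeriv j f (a * x)| ≤ A)
    (hB : ∀ j ≤ n, |iteratedDeriv j g (b * x)| ≤ B) :
    |iteratedDeriv n (fun y => f (a * y) * g (b * y)) x| ≤ A * B * (a + b) ^ n := by
  have hA0 : 0 ≤ A := (abs_nonneg _).trans (hA 0 n.zero_le)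
  rw [iteratedDeriv_fun_mul (by fun_prop) (by fun_prop), add_pow, Finset.mul_sum]
  refine (Finset.abs_sum_le_sum_abs _ _).trans (Finset.sum_le_sum fun i hi => ?_)
  have hi' : i ≤ n := Nat.lt_succ_iff.1 (Finset.mem_range.1 hi)
  rw [iteratedDeriv_comp_const_mul (hf.of_le (by exact_mod_cast hi')),
    iteratedDeriv_comp_const_mul (hg.of_le (by exact_mod_cast n.sub_le i))]
  calc |n.choose i * (a ^ i * iteratedDeriv i f (a * x)) *
        (b ^ (n - i) * iteratedDeriv (n - i) g (b * x))|
      = (n.choose i * a ^ i * b ^ (n - i)) *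
        (|iteratedDeriv i f (a * x)| * |iteratedDeriv (n - i) g (b * x)|) := by
        simp only [abs_mul, abs_pow, abs_of_nonneg ha, abs_of_nonneg hb, Nat.abs_cast]; ring
    _ ≤ (n.choose i * a ^ i * b ^ (n - i)) * (A * B) := by
        gcongr
        exacts [hA i hi', hB (n - i) (n.sub_le i)]
    _ = A * B * (a ^ i * b ^ (n - i) * n.choose i) := by ring

/-- A smooth even cutoff, equal to `1` on `[-1, 1]` and supported in `[-2, 2]`. -/
noncomputable def cutoff : ContDiffBump (0 : ℝ) := ⟨1, 2, one_pos, one_lt_two⟩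

theorem exists_cutoff_bound : ∃ C > 0,
    (∀ j ≤ 3, ∀ z, |iteratedDeriv j cutoff z| ≤ C * lorentzian z) ∧
      ∀ z, |z * deriv cutoff z| ≤ C * lorentzian z := by
  have hsupp : ∀ j, HasCompactSupport (iteratedDeriv j cutoff) := fun j => by
    induction j with
    | zero => simpa using cutoff.hasCompactSupport
    | succ j ih => simpa only [iteratedDeriv_succ] using ih.deriv
  have hcont : ∀ j, Continuous (iteratedDeriv j cutoff) := fun j =>
    (cutoff.contDiff (n := ⊤)).continuous_iteratedDeriv j (mod_cast le_top)
  choose C hC hbound using fun j => exists_abs_le_mul_lorentzian (hcont j) (hsupp j)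
  obtain ⟨C', hC', hbound'⟩ := exists_abs_le_mul_lorentzian
    (continuous_id.mul (hcont 1)) (hsupp 1).mul_left
  refine ⟨(∑ j ∈ Finset.range 4, C j) + C',
    add_pos_of_nonneg_of_pos (Finset.sum_nonneg fun i _ => (hC i).le) hC', fun j hj z => ?_,
    fun z => ?_⟩
  · refine (hbound j z).trans (mul_le_mul_of_nonneg_right ?_ (lorentzian_pos z).le)
    exact (Finset.single_le_sum (fun i _ => (hC i).le) (Finset.mem_range.2 (by omega))).trans
      (le_add_of_nonneg_right hC'.le)
  · rw [← iteratedDeriv_one]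
    refine (hbound' z).trans (mul_le_mul_of_nonneg_right ?_ (lorentzian_pos z).le)
    exact le_add_of_nonneg_left (Finset.sum_nonneg fun i _ => (hC i).le)

/-- The space profile `arctan (a x)` of the virial weight, cut off at the much larger scale
`|x| ~ 1/b`. -/
noncomputable def virialProfile (a b x : ℝ) : ℝ := Real.arctan (a * x) * cutoff (b * x)

theorem virialProfile_eq_zero {a b x : ℝ} (hx : 2 ≤ |b * x|) : virialProfile a b x = 0 := by
  rw [virialProfile, cutoff.zero_of_le_dist (by simpa [cutoff, Real.dist_eq] using hx), mul_zero]

theorem exists_abs_iteratedDeriv_virialProfile_le : ∃ C > 0, ∀ {a b : ℝ}, 0 < a → 0 < b →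
    ∀ j ≤ 3, ∀ x, |iteratedDeriv j (virialProfile a b) x| ≤
      C * (a + b) ^ j * lorentzian (b * x) := by
  obtain ⟨C, hC, hcut, -⟩ := exists_cutoff_bound
  refine ⟨10 * C, by positivity, fun {a b} ha hb j hj x => ?_⟩
  calc |iteratedDeriv j (virialProfile a b) x|
      ≤ 10 * (C * lorentzian (b * x)) * (a + b) ^ j :=
        abs_iteratedDeriv_mul_comp_le Real.contDiff_arctan cutoff.contDiff ha.le hb.le
          (fun i hi => abs_iteratedDeriv_arctan_le (hi.trans hj) _)
          (fun i hi => hcut i (hi.trans hj) _)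
    _ = 10 * C * (a + b) ^ j * lorentzian (b * x) := by ring

theorem hasDerivAt_arctan_lorentzian (z : ℝ) : HasDerivAt Real.arctan (lorentzian z) z := by
  simpa only [lorentzian, one_div] using Real.hasDerivAt_arctan z

theorem hasDerivAt_cutoff (z : ℝ) : HasDerivAt cutoff (deriv cutoff z) z :=
  (cutoff.contDiff.differentiable one_ne_zero z).hasDerivAt

theorem deriv_virialProfile (a b x : ℝ) : deriv (virialProfile a b) x =
    a * lorentzian (a * x) * cutoff (b * x) + b * (Real.arctan (a * x) * deriv cutoff (b * x)) := by
  have ha := (hasDerivAt_arctan_lorentzian (a * x)).comp x ((hasDerivAt_id' x).const_mul a)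
  have hb := (hasDerivAt_cutoff (b * x)).comp x ((hasDerivAt_id' x).const_mul b)
  refine (ha.mul hb).deriv.trans ?_
  simp only [Function.comp_apply]
  ring

theorem exists_abs_deriv_virialProfile_sub_le : ∃ C > 0, ∀ {a b : ℝ}, 0 < a → 0 < b →
    ∀ x, |deriv (virialProfile a b) x - a * lorentzian (a * x)| ≤ C * b := by
  obtain ⟨C, hC, hcut, -⟩ := exists_cutoff_bound
  refine ⟨1 + 10 * C, by positivity, fun {a b} ha hb x => ?_⟩
  have hJ := lorentzian_pos (a * x)
  have inner : |a * lorentzian (a * x) * (1 - cutoff (b * x))| ≤ b := by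
    rcases le_or_gt |b * x| 1 with hx | hx
    · rw [cutoff.one_of_mem_closedBall (by simpa [cutoff, Real.dist_eq] using hx)]
      simpa using hb.le
    · rw [abs_mul, abs_of_pos (by positivity : 0 < a * lorentzian (a * x)),
        abs_of_nonneg (sub_nonneg.2 cutoff.le_one)]
      have hdecay := abs_mul_lorentzian_le_one (a * x)
      rw [abs_mul, abs_of_pos ha] at hdecay
      rw [abs_mul, abs_of_pos hb] at hx
      calc a * lorentzian (a * x) * (1 - cutoff (b * x))
          ≤ a * lorentzian (a * x) * (b * |x|) := by
            gcongr
            linarith [cutoff.nonneg (x := b * x)]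
        _ = b * (a * |x| * lorentzian (a * x)) := by ring
        _ ≤ b := mul_le_of_le_one_right hb.le hdecay
  have outer : |b * (Real.arctan (a * x) * deriv cutoff (b * x))| ≤ b * (10 * C) := by
    rw [abs_mul, abs_mul, abs_of_pos hb, ← iteratedDeriv_one]
    gcongr
    · simpa using abs_iteratedDeriv_arctan_le (Nat.zero_le 3) (a * x)
    · exact (hcut 1 (by simp) _).trans (mul_le_of_le_one_right hC.le (lorentzian_le_one _))
  calc |deriv (virialProfile a b) x - a * lorentzian (a * x)|
      = |-(a * lorentzian (a * x) * (1 - cutoff (b * x))) +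
          b * (Real.arctan (a * x) * deriv cutoff (b * x))| := by
        rw [deriv_virialProfile]; ring_nf
    _ ≤ b + b * (10 * C) := (abs_add_le _ _).trans (add_le_add (by rwa [abs_neg]) outer)
    _ = (1 + 10 * C) * b := by ring

/-- A positive smooth function of time on `(T, ∞)` whose logarithmic derivative is at most `k / t`
in absolute value, so that it varies at a power-like rate. -/
structure IsTimeScale (f : ℝ → ℝ) (T k : ℝ) : Prop where
  contDiffOn : ContDiffOn ℝ ∞ f (Ioi T)
  pos : ∀ t > T, 0 < f t
  abs_deriv_le : ∀ t > T, |deriv f t| ≤ k / t * f t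

theorem IsTimeScale.hasDerivAt {f : ℝ → ℝ} {T k t : ℝ} (hf : IsTimeScale f T k) (ht : T < t) :
    HasDerivAt f (deriv f t) t :=
  ((hf.contDiffOn.contDiffAt (Ioi_mem_nhds ht)).differentiableAt (by simp)).hasDerivAt

theorem IsTimeScale.const_mul {f : ℝ → ℝ} {T k c : ℝ} (hf : IsTimeScale f T k) (hc : 0 < c) :
    IsTimeScale (fun t => c * f t) T k where
  contDiffOn := contDiffOn_const.mul hf.contDiffOn
  pos t ht := mul_pos hc (hf.pos t ht)
  abs_deriv_le t ht := by
    rw [deriv_const_mul_field, abs_mul, abs_of_pos hc, mul_left_comm]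
    exact mul_le_mul_of_nonneg_left (hf.abs_deriv_le t ht) hc.le

theorem IsTimeScale.mono {f : ℝ → ℝ} {T k k' : ℝ} (hf : IsTimeScale f T k) (hT : 0 ≤ T)
    (hk : k ≤ k') : IsTimeScale f T k' where
  contDiffOn := hf.contDiffOn
  pos := hf.pos
  abs_deriv_le t ht := (hf.abs_deriv_le t ht).trans (mul_le_mul_of_nonneg_right
    (div_le_div_of_nonneg_right hk (hT.trans_lt ht).le) (hf.pos t ht).le)

/-- The weight of the virial functional: `h(t) arctan(a(t) x)`, cut off at `|x| ~ 1 / b(t)`. -/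
noncomputable def virialWeight (h a b : ℝ → ℝ) (t x : ℝ) : ℝ := h t * virialProfile (a t) (b t) x

variable {h a b : ℝ → ℝ} {T k : ℝ}

theorem contDiffOn_virialWeight (hh : IsTimeScale h T k) (ha : IsTimeScale a T k)
    (hb : IsTimeScale b T k) : ContDiffOn ℝ ∞ ↿(virialWeight h a b) (Ioi T ×ˢ univ) := by
  have comp_fst : ∀ {f : ℝ → ℝ}, IsTimeScale f T k →
      ContDiffOn ℝ ∞ (fun p : ℝ × ℝ => f p.1) (Ioi T ×ˢ univ) := fun hf =>
    hf.contDiffOn.comp contDiffOn_fst fun p hp => hp.1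
  exact (comp_fst hh).mul ((Real.contDiff_arctan.comp_contDiffOn
    ((comp_fst ha).mul contDiffOn_snd)).mul
      (cutoff.contDiff.comp_contDiffOn ((comp_fst hb).mul contDiffOn_snd)))

theorem exists_isCompact_virialWeight_eq_zero (hb : IsTimeScale b T k) {t : ℝ} (ht : T < t) :
    ∃ K s, IsCompact K ∧ IsOpen s ∧ t ∈ s ∧ s ⊆ Ioi T ∧
      ∀ r ∈ s, ∀ x ∉ K, virialWeight h a b r x = 0 := by
  have hbt := hb.pos t ht
  obtain ⟨s, hs, hs_open, hts⟩ := eventually_nhds_iff.1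
    (((hb.hasDerivAt ht).continuousAt.eventually_const_lt (half_lt_self hbt)).and
      (Ioi_mem_nhds ht))
  refine ⟨Icc (-(4 / b t)) (4 / b t), s, isCompact_Icc, hs_open, hts, fun r hr => (hs r hr).2,
    fun r hr x hx => ?_⟩
  have hx : 4 / b t < |x| := not_le.1 fun h => hx (abs_le.1 h)
  rw [div_lt_iff₀ hbt] at hx
  have hbr := (hs r hr).1
  rw [virialWeight, virialProfile_eq_zero, mul_zero]
  rw [abs_mul, abs_of_pos (by linarith)]
  nlinarith [abs_nonneg x]

theorem exists_abs_virialWeight_le : ∃ C > 0, ∀ {h a b : ℝ → ℝ} {t : ℝ}, 0 ≤ h t → 0 < a t →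
    0 < b t → ∀ x, |virialWeight h a b t x| ≤ C * h t * lorentzian (b t * x) := by
  obtain ⟨C, hC, hprofile⟩ := exists_abs_iteratedDeriv_virialProfile_le
  refine ⟨C, hC, fun {h a b t} hh ha hb x => ?_⟩
  have := hprofile ha hb 0 (Nat.zero_le 3) x
  rw [iteratedDeriv_zero, pow_zero, mul_one] at this
  rw [virialWeight, abs_mul, abs_of_nonneg hh]
  exact (mul_le_mul_of_nonneg_left this hh).trans_eq (by ring)

theorem spaceDeriv_virialWeight (h a b : ℝ → ℝ) (t x : ℝ) :
    ∂ₓ (virialWeight h a b) t x = h t * deriv (virialProfile (a t) (b t)) x :=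
  deriv_const_mul_field _

theorem exists_abs_spaceDeriv_virialWeight_sub_le : ∃ C > 0, ∀ {h a b : ℝ → ℝ} {t : ℝ}, 0 ≤ h t →
    0 < a t → 0 < b t → ∀ x,
      |∂ₓ (virialWeight h a b) t x - h t * a t * lorentzian (a t * x)| ≤ C * h t * b t := by
  obtain ⟨C, hC, hprofile⟩ := exists_abs_deriv_virialProfile_sub_le
  refine ⟨C, hC, fun {h a b t} hh ha hb x => ?_⟩
  rw [spaceDeriv_virialWeight, mul_assoc, ← mul_sub, abs_mul, abs_of_nonneg hh]
  exact (mul_le_mul_of_nonneg_left (hprofile ha hb x) hh).trans_eq (by ring)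

theorem exists_abs_third_spaceDeriv_virialWeight_le : ∃ C > 0, ∀ {h a b : ℝ → ℝ} {t : ℝ},
    0 ≤ h t → 0 < a t → 0 < b t → ∀ x, |∂ₓ ∂ₓ ∂ₓ (virialWeight h a b) t x| ≤
      C * (h t * (a t + b t) ^ 3) * lorentzian (b t * x) := by
  obtain ⟨C, hC, hprofile⟩ := exists_abs_iteratedDeriv_virialProfile_le
  refine ⟨C, hC, fun {h a b t} hh ha hb x => ?_⟩
  have third : ∂ₓ ∂ₓ ∂ₓ (virialWeight h a b) t x =
      h t * iteratedDeriv 3 (virialProfile (a t) (b t)) x := by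
    rw [← iteratedDeriv_const_mul_field]
    simp only [iteratedDeriv_succ, iteratedDeriv_zero]
    rfl
  rw [third, abs_mul, abs_of_nonneg hh]
  exact (mul_le_mul_of_nonneg_left (hprofile ha hb 3 le_rfl x) hh).trans_eq (by ring)

theorem timeDeriv_virialWeight (hh : IsTimeScale h T k) (ha : IsTimeScale a T k)
    (hb : IsTimeScale b T k) {t : ℝ} (ht : T < t) (x : ℝ) :
    ∂ₜ (virialWeight h a b) t x = deriv h t * virialProfile (a t) (b t) x +
      h t * (lorentzian (a t * x) * (deriv a t * x) * cutoff (b t * x) +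
        Real.arctan (a t * x) * (deriv cutoff (b t * x) * (deriv b t * x))) :=
  ((hh.hasDerivAt ht).mul
    (((hasDerivAt_arctan_lorentzian _).comp t ((ha.hasDerivAt ht).mul_const x)).mul
      ((hasDerivAt_cutoff _).comp t ((hb.hasDerivAt ht).mul_const x)))).deriv

theorem exists_abs_timeDeriv_virialWeight_le : ∃ C > 0, ∀ {h a b : ℝ → ℝ} {T k : ℝ},
    IsTimeScale h T k → IsTimeScale a T k → IsTimeScale b T k → ∀ t > T, ∀ x,
      |∂ₜ (virialWeight h a b) t x| ≤ C * (k / t * h t) * lorentzian (b t * x) := by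
  obtain ⟨C₀, hC₀, hprofile⟩ := exists_abs_iteratedDeriv_virialProfile_le
  obtain ⟨C₁, hC₁, hcut, hcut'⟩ := exists_cutoff_bound
  refine ⟨C₀ + 11 * C₁, by positivity, fun {h a b T k} hh ha hb t ht x => ?_⟩
  have hht := hh.pos t ht
  have hat := ha.pos t ht
  have hbt := hb.pos t ht
  have hk : 0 ≤ k / t := nonneg_of_mul_nonneg_left ((abs_nonneg _).trans (hh.abs_deriv_le t ht)) hht
  have rate : ∀ {f : ℝ → ℝ}, IsTimeScale f T k → |deriv f t * x| ≤ k / t * |f t * x| := by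
    intro f hf
    rw [abs_mul, abs_mul, abs_of_pos (hf.pos t ht), ← mul_assoc]
    exact mul_le_mul_of_nonneg_right (hf.abs_deriv_le t ht) (abs_nonneg x)
  have amplitude : |deriv h t * virialProfile (a t) (b t) x| ≤
      k / t * h t * (C₀ * lorentzian (b t * x)) := by
    rw [abs_mul]
    have := hprofile hat hbt 0 (Nat.zero_le 3) x
    exact mul_le_mul (hh.abs_deriv_le t ht) (by simpa using this) (abs_nonneg _) (by positivity)
  have inner : |lorentzian (a t * x) * (deriv a t * x) * cutoff (b t * x)| ≤
      k / t * (C₁ * lorentzian (b t * x)) := by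
    rw [abs_mul, abs_mul, abs_of_pos (lorentzian_pos _)]
    refine mul_le_mul ?_ (hcut 0 (Nat.zero_le 3) _) (abs_nonneg _) hk
    nlinarith [rate ha, lorentzian_pos (a t * x), abs_mul_lorentzian_le_one (a t * x)]
  have outer : |Real.arctan (a t * x) * (deriv cutoff (b t * x) * (deriv b t * x))| ≤
      10 * (k / t * (C₁ * lorentzian (b t * x))) := by
    rw [abs_mul, abs_mul]
    refine mul_le_mul (by simpa using abs_iteratedDeriv_arctan_le (Nat.zero_le 3) (a t * x)) ?_
      (by positivity) (by norm_num)
    calc |deriv cutoff (b t * x)| * |deriv b t * x|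
        ≤ |deriv cutoff (b t * x)| * (k / t * |b t * x|) := by gcongr; exact rate hb
      _ = k / t * |b t * x * deriv cutoff (b t * x)| := by rw [abs_mul (b t * x)]; ring
      _ ≤ k / t * (C₁ * lorentzian (b t * x)) := mul_le_mul_of_nonneg_left (hcut' _) hk
  rw [timeDeriv_virialWeight hh ha hb ht]
  refine (abs_add_le _ _).trans ?_
  rw [abs_mul (h t), abs_of_pos hht]
  refine (add_le_add amplitude (mul_le_mul_of_nonneg_left
    ((abs_add_le _ _).trans (add_le_add inner outer)) hht.le)).trans_eq ?_
  ring

end VirialProfile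

section VirialEstimate

/-- Three time scales `h`, `a`, `b` for which the virial weight with amplitude `h`, inner scale
`1 / a` and outer scale `1 / b` produces only errors that are integrable in time. -/
structure IsVirialScaling (h a b : ℝ → ℝ) (T k κ : ℝ) : Prop where
  one_le_time : 1 ≤ T
  one_le_const : 1 ≤ k
  rate_pos : 0 < κ
  amplitude : IsTimeScale h T k
  inner : IsTimeScale a T k
  outer : IsTimeScale b T k
  outer_le_one : ∀ t > T, b t ≤ 1
  decay : ∀ t > T, h t * ((√(b t))⁻¹ * (t⁻¹ + (a t + b t) ^ 3) + b t) ≤ k * t ^ (-1 - κ)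

/-- A conservation law whose flux `P` is nonnegative and dominated, as are the density `m` and the
dispersive part `S`, by an energy density `e` with uniformly bounded total energy. -/
structure IsCoerciveConservationLaw (m S P e : ℝ → ℝ → ℝ) (A E : ℝ) : Prop
    extends IsConservationLaw m S P where
  const_nonneg : 0 ≤ A
  energy_nonneg : ∀ t x, 0 ≤ e t x
  integrable_energy : ∀ t, Integrable (e t)
  integral_energy_le : ∀ t, ∫ x, e t x ≤ E
  abs_density_le : ∀ t x, |m t x| ≤ A * (√(e t x) + e t x)
  abs_dispersion_le : ∀ t x, |S t x| ≤ A * (√(e t x) + e t x)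
  flux_nonneg : ∀ t x, 0 ≤ P t x
  flux_le : ∀ t x, P t x ≤ A * e t x

theorem sqrt_add_mul_lorentzian_le {b e z : ℝ} (hb : 0 < b) (hb1 : b ≤ 1) (he : 0 ≤ e) :
    (√e + e) * lorentzian z ≤ (√b)⁻¹ * (2 * e) + √b * lorentzian z := by
  have hsb : 0 < √b := Real.sqrt_pos.2 hb
  have one_le : 1 ≤ (√b)⁻¹ := (one_le_inv₀ hsb).2 (Real.sqrt_le_one.2 hb1)
  have young : √e ≤ (√b)⁻¹ * e + √b := by
    rw [inv_mul_eq_div, ← sub_le_iff_le_add, le_div_iff₀ hsb]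
    nlinarith [Real.sq_sqrt he, sq_nonneg (√e - √b), Real.sqrt_nonneg e]
  calc (√e + e) * lorentzian z
      ≤ ((√b)⁻¹ * e + √b + (√b)⁻¹ * e) * lorentzian z := by
        refine mul_le_mul_of_nonneg_right (add_le_add young ?_) (lorentzian_pos z).le
        exact le_mul_of_one_le_left he one_le
    _ = (√b)⁻¹ * (2 * e) * lorentzian z + √b * lorentzian z := by ring
    _ ≤ (√b)⁻¹ * (2 * e) + √b * lorentzian z := by
        have := mul_le_of_le_one_right (show 0 ≤ (√b)⁻¹ * (2 * e) by positivity)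
          (lorentzian_le_one z)
        linarith

theorem abs_integral_mul_le_of_abs_le_sqrt_add {F w e : ℝ → ℝ} {b A c E : ℝ} (hb : 0 < b)
    (hb1 : b ≤ 1) (hA : 0 ≤ A) (hc : 0 ≤ c) (he : ∀ x, 0 ≤ e x) (he_int : Integrable e)
    (hE : ∫ x, e x ≤ E) (hF : ∀ x, |F x| ≤ A * (√(e x) + e x))
    (hw : ∀ x, |w x| ≤ c * lorentzian (b * x)) :
    |∫ x, F x * w x| ≤ A * c * (2 * E + Real.pi) * (√b)⁻¹ := by
  have hJ := (integrable_lorentzian_comp_mul hb.ne').const_mul √b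
  have he2 := (he_int.const_mul 2).const_mul (√b)⁻¹
  have hdom : Integrable fun x => A * c * ((√b)⁻¹ * (2 * e x) + √b * lorentzian (b * x)) :=
    (he2.add hJ).const_mul (A * c)
  have bound : ∀ x, |F x * w x| ≤
      A * c * ((√b)⁻¹ * (2 * e x) + √b * lorentzian (b * x)) := fun x => calc
    |F x * w x| ≤ A * (√(e x) + e x) * (c * lorentzian (b * x)) := by
        rw [abs_mul]
        exact mul_le_mul (hF x) (hw x) (abs_nonneg _) ((abs_nonneg _).trans (hF x))
    _ = A * c * ((√(e x) + e x) * lorentzian (b * x)) := by ring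
    _ ≤ _ := mul_le_mul_of_nonneg_left (sqrt_add_mul_lorentzian_le hb hb1 (he x)) (by positivity)
  calc |∫ x, F x * w x|
      ≤ ∫ x, A * c * ((√b)⁻¹ * (2 * e x) + √b * lorentzian (b * x)) :=
        (Real.norm_eq_abs _).symm.trans_le
          (norm_integral_le_of_norm_le hdom (Eventually.of_forall bound))
    _ = A * c * ((√b)⁻¹ * (2 * ∫ x, e x) + √b * (Real.pi / b)) := by
        rw [integral_const_mul, integral_add he2 hJ]
        simp only [integral_const_mul, integral_lorentzian_comp_mul hb]
    _ ≤ A * c * ((√b)⁻¹ * (2 * E) + √b * (Real.pi / b)) := by gcongr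
    _ = A * c * (2 * E + Real.pi) * (√b)⁻¹ := by
        nth_rewrite 3 [← Real.mul_self_sqrt hb.le]
        field_simp

theorem abs_integral_mul_sub_integral_mul_le {F f g : ℝ → ℝ} {δ : ℝ} (hF : Integrable F)
    (hF0 : ∀ x, 0 ≤ F x) (hf : Integrable fun x => F x * f x) (hg : Integrable fun x => F x * g x)
    (hfg : ∀ x, |f x - g x| ≤ δ) :
    |(∫ x, F x * f x) - ∫ x, F x * g x| ≤ δ * ∫ x, F x := by
  rw [← integral_sub hf hg, ← integral_const_mul, ← Real.norm_eq_abs]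
  refine norm_integral_le_of_norm_le (hF.const_mul δ) (Eventually.of_forall fun x => ?_)
  rw [← mul_sub, norm_mul, Real.norm_of_nonneg (hF0 x), mul_comm]
  exact mul_le_mul_of_nonneg_right (hfg x) (hF0 x)

theorem lintegral_lt_top_of_le_deriv_add_rpow {F V V' : ℝ → ℝ} {T T' B D κ : ℝ} (hT : 0 ≤ T)
    (hTT' : T < T') (hκ : 0 < κ) (hV : ∀ t > T, HasDerivAt V (V' t) t) (hB : ∀ t > T, |V t| ≤ B)
    (hD : 0 ≤ D) (hF : ∀ t > T, 0 ≤ F t) (hFV : ∀ t > T, F t ≤ V' t + D * t ^ (-1 - κ)) :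
    ∫⁻ t in Ici T', ENNReal.ofReal (F t) < ⊤ := by
  set G : ℝ → ℝ := fun t => V t - D / κ * t ^ (-κ)
  set G' : ℝ → ℝ := fun t => V' t + D * t ^ (-1 - κ)
  have hG : ∀ t > T, HasDerivAt G (G' t) t := fun t ht => by
    refine ((hV t ht).sub ((Real.hasDerivAt_rpow_const (p := -κ)
      (Or.inl (hT.trans_lt ht).ne')).const_mul (D / κ))).congr_deriv ?_
    rw [show -κ - 1 = -1 - κ by ring]
    simp only [G']
    field_simp
    ring
  have hG'_nonneg : ∀ t > T, 0 ≤ G' t := fun t ht => (hF t ht).trans (hFV t ht)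
  have hG'_int : ∀ t, IntegrableOn G' (Ioc T' t) := fun t =>
    intervalIntegral.integrableOn_deriv_of_nonneg
      (fun s hs => (hG s (hTT'.trans_le hs.1)).continuousAt.continuousWithinAt)
      (fun s hs => hG s (hTT'.trans hs.1)) fun s hs => hG'_nonneg s (hTT'.trans hs.1)
  have hG'_Ioi : IntegrableOn G' (Ioi T') := by
    refine integrableOn_Ioi_of_intervalIntegral_norm_bounded (B - G T') T' hG'_int tendsto_id ?_
    filter_upwards [eventually_ge_atTop T'] with t ht
    rw [intervalIntegral.integral_congr (g := G') fun s hs =>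
        Real.norm_of_nonneg (hG'_nonneg s (hTT'.trans_le (uIcc_of_le ht ▸ hs).1)),
      intervalIntegral.integral_eq_sub_of_hasDerivAt
        (fun s hs => hG s (hTT'.trans_le (uIcc_of_le ht ▸ hs).1))
        ((intervalIntegrable_iff_integrableOn_Ioc_of_le ht).2 (hG'_int t))]
    have hVt := (le_abs_self _).trans (hB t (hTT'.trans_le ht))
    have := Real.rpow_nonneg ((hT.trans_lt hTT').trans_le ht).le (-κ)
    have : 0 ≤ D / κ * t ^ (-κ) := by positivity
    simp only [G]
    linarith
  calc ∫⁻ t in Ici T', ENNReal.ofReal (F t)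
      ≤ ∫⁻ t in Ici T', ENNReal.ofReal (G' t) := setLIntegral_mono' measurableSet_Ici fun t ht =>
        ENNReal.ofReal_le_ofReal (hFV t (hTT'.trans_le ht))
    _ = ∫⁻ t in Ioi T', ENNReal.ofReal (G' t) := setLIntegral_congr Ioi_ae_eq_Ici.symm
    _ < ⊤ := Integrable.lintegral_lt_top hG'_Ioi

namespace IsVirialScaling

variable {h a b : ℝ → ℝ} {T k κ t : ℝ}

theorem time_pos (hs : IsVirialScaling h a b T k κ) (ht : T < t) : 0 < t :=
  (zero_lt_one.trans_le hs.one_le_time).trans ht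

theorem amplitude_mul_inv_sqrt_le (hs : IsVirialScaling h a b T k κ) (ht : T < t) :
    h t * (√(b t))⁻¹ ≤ k := by
  have ht1 : 1 ≤ t := hs.one_le_time.trans ht.le
  have hht := hs.amplitude.pos t ht
  have hat := hs.inner.pos t ht
  have hbt := hs.outer.pos t ht
  calc h t * (√(b t))⁻¹ = t * (h t * ((√(b t))⁻¹ * t⁻¹)) := by field_simp
    _ ≤ t * (h t * ((√(b t))⁻¹ * (t⁻¹ + (a t + b t) ^ 3) + b t)) := by
        gcongr
        exact le_add_of_le_of_nonneg (by gcongr; linarith [pow_pos (add_pos hat hbt) 3]) hbt.le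
    _ ≤ t * (k * t ^ (-1 - κ)) := mul_le_mul_of_nonneg_left (hs.decay t ht) (by positivity)
    _ = k * t ^ (-κ) := by
        rw [show -κ = 1 + (-1 - κ) by ring, Real.rpow_add (by positivity), Real.rpow_one]; ring
    _ ≤ k := mul_le_of_le_one_right (zero_le_one.trans hs.one_le_const)
        (Real.rpow_le_one_of_one_le_of_nonpos ht1 (by linarith [hs.rate_pos]))

theorem errors_le (hs : IsVirialScaling h a b T k κ) (ht : T < t) {c₀ c₁ c₂ : ℝ} (hc₀ : 0 ≤ c₀)
    (hc₁ : 0 ≤ c₁) (hc₂ : 0 ≤ c₂) :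
    c₀ * (k / t * h t * (√(b t))⁻¹) + c₁ * (h t * b t) +
      c₂ * (h t * (a t + b t) ^ 3 * (√(b t))⁻¹) ≤ (c₀ + c₁ + c₂) * k * k * t ^ (-1 - κ) := by
  have ht0 := hs.time_pos ht
  have hk := hs.one_le_const
  have hht := hs.amplitude.pos t ht
  have hat := hs.inner.pos t ht
  have hbt := hs.outer.pos t ht
  calc c₀ * (k / t * h t * (√(b t))⁻¹) + c₁ * (h t * b t) +
        c₂ * (h t * (a t + b t) ^ 3 * (√(b t))⁻¹)
      = c₀ * k * (h t * (√(b t))⁻¹ * t⁻¹) + c₁ * 1 * (h t * b t) +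
        c₂ * 1 * (h t * (√(b t))⁻¹ * (a t + b t) ^ 3) := by ring
    _ ≤ (c₀ + c₁ + c₂) * k * (h t * (√(b t))⁻¹ * t⁻¹) + (c₀ + c₁ + c₂) * k * (h t * b t) +
        (c₀ + c₁ + c₂) * k * (h t * (√(b t))⁻¹ * (a t + b t) ^ 3) := by
        gcongr <;> linarith
    _ = (c₀ + c₁ + c₂) * k * (h t * ((√(b t))⁻¹ * (t⁻¹ + (a t + b t) ^ 3) + b t)) := by ring
    _ ≤ (c₀ + c₁ + c₂) * k * (k * t ^ (-1 - κ)) :=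
        mul_le_mul_of_nonneg_left (hs.decay t ht) (by positivity)
    _ = (c₀ + c₁ + c₂) * k * k * t ^ (-1 - κ) := by ring

end IsVirialScaling

namespace IsCoerciveConservationLaw

variable {m S P e : ℝ → ℝ → ℝ} {A E : ℝ}

theorem bound_nonneg (hm : IsCoerciveConservationLaw m S P e A E) : 0 ≤ E :=
  (integral_nonneg (hm.energy_nonneg 0)).trans (hm.integral_energy_le 0)

theorem integrable_flux (hm : IsCoerciveConservationLaw m S P e A E) (t : ℝ) :
    Integrable (P t) :=
  ((hm.integrable_energy t).const_mul A).mono'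
    (show Continuous (P t) from have := hm.contDiff_flux; by fun_prop).aestronglyMeasurable
    (Eventually.of_forall fun x => by
      rw [Real.norm_of_nonneg (hm.flux_nonneg t x)]; exact hm.flux_le t x)

theorem integrable_flux_mul_lorentzian (hm : IsCoerciveConservationLaw m S P e A E) (t c : ℝ) :
    Integrable fun x => P t x * lorentzian (c * x) :=
  (hm.integrable_flux t).mul_bdd (c := 1) (have := continuous_lorentzian; by fun_prop)
    (Eventually.of_forall fun x => by
      rw [Real.norm_of_nonneg (lorentzian_pos _).le]; exact lorentzian_le_one _)

theorem integral_flux_le (hm : IsCoerciveConservationLaw m S P e A E) (t : ℝ) :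
    ∫ x, P t x ≤ A * E :=
  calc ∫ x, P t x ≤ ∫ x, A * e t x := integral_mono (hm.integrable_flux t)
        ((hm.integrable_energy t).const_mul A) (hm.flux_le t)
    _ ≤ A * E := by
        rw [integral_const_mul]
        exact mul_le_mul_of_nonneg_left (hm.integral_energy_le t) hm.const_nonneg

theorem abs_integral_mul_le (hm : IsCoerciveConservationLaw m S P e A E) {F w : ℝ → ℝ} {b c : ℝ}
    (t : ℝ) (hb : 0 < b) (hb1 : b ≤ 1) (hc : 0 ≤ c) (hF : ∀ x, |F x| ≤ A * (√(e t x) + e t x))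
    (hw : ∀ x, |w x| ≤ c * lorentzian (b * x)) :
    |∫ x, F x * w x| ≤ A * (2 * E + Real.pi) * (c * (√b)⁻¹) :=
  (abs_integral_mul_le_of_abs_le_sqrt_add hb hb1 hm.const_nonneg hc (hm.energy_nonneg t)
    (hm.integrable_energy t) (hm.integral_energy_le t) hF hw).trans_eq (by ring)

variable {h a b : ℝ → ℝ} {T k κ : ℝ}

theorem exists_abs_integral_mul_virialWeight_le (hm : IsCoerciveConservationLaw m S P e A E)
    (hs : IsVirialScaling h a b T k κ) :
    ∃ B, ∀ t > T, |∫ x, m t x * virialWeight h a b t x| ≤ B := by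
  obtain ⟨C, hC, hweight⟩ := exists_abs_virialWeight_le
  refine ⟨A * (2 * E + Real.pi) * (C * k), fun t ht => ?_⟩
  have hht := hs.amplitude.pos t ht
  have hbt := hs.outer.pos t ht
  have hE := hm.bound_nonneg
  have hA := hm.const_nonneg
  refine (hm.abs_integral_mul_le t hbt (hs.outer_le_one t ht) (by positivity)
    (hm.abs_density_le t) (hweight hht.le (hs.inner.pos t ht) hbt)).trans ?_
  rw [mul_assoc C]
  gcongr
  exact hs.amplitude_mul_inv_sqrt_le ht

theorem hasDerivAt_virial (hm : IsCoerciveConservationLaw m S P e A E)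
    (hs : IsVirialScaling h a b T k κ) {t : ℝ} (ht : T < t) :
    HasDerivAt (fun r => ∫ x, m r x * virialWeight h a b r x)
      ((∫ x, m t x * ∂ₜ (virialWeight h a b) t x) +
        (∫ x, S t x * ∂ₓ ∂ₓ ∂ₓ (virialWeight h a b) t x) +
          ∫ x, P t x * ∂ₓ (virialWeight h a b) t x) t := by
  obtain ⟨K, s, hK, hs_open, hts, hsT, hzero⟩ :=
    exists_isCompact_virialWeight_eq_zero (h := h) (a := a) hs.outer ht
  exact hm.toIsConservationLaw.hasDerivAt_integral_mul hs_open
    ((contDiffOn_virialWeight hs.amplitude hs.inner hs.outer).mono (prod_mono_left hsT)) hK hzero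
    hts

theorem exists_le_integral_flux_mul_spaceDeriv (hm : IsCoerciveConservationLaw m S P e A E)
    (hs : IsVirialScaling h a b T k κ) : ∃ C > 0, ∀ t > T,
      h t * a t * ∫ x, P t x * lorentzian (a t * x) ≤
        (∫ x, P t x * ∂ₓ (virialWeight h a b) t x) + A * C * E * (h t * b t) := by
  obtain ⟨C, hC, hweight⟩ := exists_abs_spaceDeriv_virialWeight_sub_le
  refine ⟨C, hC, fun t ht => ?_⟩
  have hht := hs.amplitude.pos t ht
  have hbt := hs.outer.pos t ht
  have hP := hm.integrable_flux t
  obtain ⟨K, s, hK, -, hts, -, hzero⟩ :=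
    exists_isCompact_virialWeight_eq_zero (h := h) (a := a) hs.outer ht
  have hPW : Integrable fun x => P t x * ∂ₓ (virialWeight h a b) t x := by
    have hc : HasCompactSupport (virialWeight h a b t) := HasCompactSupport.intro hK (hzero t hts)
    have hW : ContDiff ℝ ∞ (virialWeight h a b t) :=
      contDiff_slice (contDiffOn_virialWeight hs.amplitude hs.inner hs.outer) ht
    have := hm.contDiff_flux
    exact (Continuous.mul (by fun_prop) (hW.continuous_deriv (by simp))
      ).integrable_of_hasCompactSupport hc.deriv.mul_left
  have hPJ : Integrable fun x => P t x * (h t * a t * lorentzian (a t * x)) := by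
    simpa only [mul_left_comm] using (hm.integrable_flux_mul_lorentzian t (a t)).const_mul
      (h t * a t)
  have close := (neg_le_abs _).trans (abs_integral_mul_sub_integral_mul_le hP (hm.flux_nonneg t)
    hPW hPJ (hweight hht.le (hs.inner.pos t ht) hbt))
  have := mul_le_mul_of_nonneg_left (hm.integral_flux_le t)
    (show 0 ≤ C * h t * b t by positivity)
  rw [← integral_const_mul]
  simp only [mul_left_comm (P t _)] at close
  linarith

theorem exists_le_deriv_virial_add (hm : IsCoerciveConservationLaw m S P e A E)
    (hs : IsVirialScaling h a b T k κ) : ∃ D ≥ 0, ∀ t > T,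
      h t * a t * ∫ x, P t x * lorentzian (a t * x) ≤
        deriv (fun r => ∫ x, m r x * virialWeight h a b r x) t + D * t ^ (-1 - κ) := by
  obtain ⟨C₁, hC₁, hflux⟩ := hm.exists_le_integral_flux_mul_spaceDeriv hs
  obtain ⟨C₃, hC₃, hspace⟩ := exists_abs_third_spaceDeriv_virialWeight_le
  obtain ⟨C₀, hC₀, htime⟩ := exists_abs_timeDeriv_virialWeight_le
  have hE := hm.bound_nonneg
  have hA := hm.const_nonneg
  have hk := hs.one_le_const
  set N := A * (2 * E + Real.pi)
  refine ⟨(N * C₀ + A * C₁ * E + N * C₃) * k * k, by positivity, fun t ht => ?_⟩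
  have ht0 := hs.time_pos ht
  have hht := hs.amplitude.pos t ht
  have hat := hs.inner.pos t ht
  have hbt := hs.outer.pos t ht
  have hb1 := hs.outer_le_one t ht
  have time_term := (neg_le_abs _).trans (hm.abs_integral_mul_le t hbt hb1 (by positivity)
    (hm.abs_density_le t)
    (htime hs.amplitude hs.inner hs.outer t ht))
  have space_term := (neg_le_abs _).trans (hm.abs_integral_mul_le t hbt hb1 (by positivity)
    (hm.abs_dispersion_le t) (hspace hht.le hat hbt))
  have errors := hs.errors_le ht (c₀ := N * C₀) (c₁ := A * C₁ * E) (c₂ := N * C₃) (by positivity)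
    (by positivity)
    (by positivity)
  rw [(hm.hasDerivAt_virial hs ht).deriv]
  linarith [hflux t ht]

theorem lintegral_lt_top (hm : IsCoerciveConservationLaw m S P e A E)
    (hs : IsVirialScaling h a b T k κ) {T' : ℝ} (hT' : T < T') :
    ∫⁻ t in Ici T', ENNReal.ofReal (h t * a t * ∫ x, P t x * lorentzian (a t * x)) < ⊤ := by
  obtain ⟨B, hB⟩ := hm.exists_abs_integral_mul_virialWeight_le hs
  obtain ⟨D, hD, hflux⟩ := hm.exists_le_deriv_virial_add hs
  refine lintegral_lt_top_of_le_deriv_add_rpow (zero_le_one.trans hs.one_le_time) hT' hs.rate_pos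
    (fun t ht => (hm.hasDerivAt_virial hs ht).differentiableAt.hasDerivAt) hB hD
    (fun t ht => ?_) hflux
  have hht := hs.amplitude.pos t ht
  have hat := hs.inner.pos t ht
  exact mul_nonneg (by positivity) (integral_nonneg fun x =>
    mul_nonneg (hm.flux_nonneg t x) (lorentzian_pos _).le)

theorem lintegral_lt_top_of_le (hm : IsCoerciveConservationLaw m S P e A E)
    (hs : IsVirialScaling h a b T k κ) {T' C : ℝ} (hT' : T < T') {G : ℝ → ℝ → ℝ}
    (hG₀ : ∀ t ≥ T', ∀ x, 0 ≤ G t x)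
    (hG : ∀ t ≥ T', ∀ x, G t x ≤ C * (P t x * lorentzian (a t * x))) :
    ∫⁻ t in Ici T', ENNReal.ofReal (h t * a t * ∫ x, G t x) < ⊤ := by
  have hle : ∀ t ∈ Ici T', ENNReal.ofReal (h t * a t * ∫ x, G t x) ≤
      ENNReal.ofReal |C| * ENNReal.ofReal (h t * a t * ∫ x, P t x * lorentzian (a t * x)) := by
    intro t ht
    have hht := hs.amplitude.pos t (hT'.trans_le ht)
    have hat := hs.inner.pos t (hT'.trans_le ht)
    have hint := hm.integrable_flux_mul_lorentzian t (a t)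
    have hG' : ∀ x, G t x ≤ |C| * (P t x * lorentzian (a t * x)) := fun x =>
      (hG t ht x).trans (mul_le_mul_of_nonneg_right (le_abs_self C)
        (mul_nonneg (hm.flux_nonneg t x) (lorentzian_pos _).le))
    rw [← ENNReal.ofReal_mul (abs_nonneg C), mul_left_comm, ← integral_const_mul |C|]
    exact ENNReal.ofReal_le_ofReal (mul_le_mul_of_nonneg_left (integral_mono_of_nonneg
      (Eventually.of_forall (hG₀ t ht)) (hint.const_mul _) (Eventually.of_forall hG'))
      (mul_nonneg hht.le hat.le))
  calc ∫⁻ t in Ici T', ENNReal.ofReal (h t * a t * ∫ x, G t x)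
      ≤ ∫⁻ t in Ici T', ENNReal.ofReal |C| *
          ENNReal.ofReal (h t * a t * ∫ x, P t x * lorentzian (a t * x)) :=
        setLIntegral_mono' measurableSet_Ici hle
    _ = ENNReal.ofReal |C| * ∫⁻ t in Ici T',
          ENNReal.ofReal (h t * a t * ∫ x, P t x * lorentzian (a t * x)) :=
        lintegral_const_mul' _ _ ENNReal.ofReal_ne_top
    _ < ⊤ := ENNReal.mul_lt_top ENNReal.ofReal_lt_top (hm.lintegral_lt_top hs hT')

end IsCoerciveConservationLaw

end VirialEstimate

section PowLog

/-- The power-logarithmic scale `t ^ r (log t) ^ s`. -/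
noncomputable def powLog (r s t : ℝ) : ℝ := t ^ r * Real.log t ^ s

variable {r s t : ℝ}

theorem one_le_log (ht : 3 < t) : 1 ≤ Real.log t := by
  rw [Real.le_log_iff_exp_le (by linarith)]
  linarith [Real.exp_one_lt_d9]

theorem powLog_pos (ht : 1 < t) (r s : ℝ) : 0 < powLog r s t :=
  mul_pos (Real.rpow_pos_of_pos (one_pos.trans ht) r) (Real.rpow_pos_of_pos (Real.log_pos ht) s)

theorem powLog_mul_powLog (ht : 1 < t) (r s r' s' : ℝ) :
    powLog r s t * powLog r' s' t = powLog (r + r') (s + s') t := by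
  rw [powLog, powLog, powLog, Real.rpow_add (one_pos.trans ht), Real.rpow_add (Real.log_pos ht)]
  ring

theorem powLog_zero_right (r t : ℝ) : powLog r 0 t = t ^ r := by
  rw [powLog, Real.rpow_zero, mul_one]

theorem powLog_pow_three (ht : 1 < t) (r s : ℝ) :
    powLog r s t ^ 3 = powLog (3 * r) (3 * s) t := by
  rw [pow_succ, sq, powLog_mul_powLog ht, powLog_mul_powLog ht]
  ring_nf

theorem inv_sqrt_powLog_zero_right (ht : 1 < t) (r : ℝ) :
    (√(powLog r 0 t))⁻¹ = powLog (-(r / 2)) 0 t := by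
  rw [powLog_zero_right, powLog_zero_right, Real.sqrt_eq_rpow, ← Real.rpow_mul (by linarith),
    ← Real.rpow_neg (by linarith)]
  ring_nf

theorem hasDerivAt_powLog (ht : 1 < t) (r s : ℝ) :
    HasDerivAt (powLog r s) ((r / t + s / (t * Real.log t)) * powLog r s t) t := by
  have ht0 : 0 < t := one_pos.trans ht
  have hlog := Real.log_pos ht
  refine ((Real.hasDerivAt_rpow_const (p := r) (Or.inl ht0.ne')).mul
    ((Real.hasDerivAt_log ht0.ne').rpow_const (p := s) (Or.inl hlog.ne'))).congr_deriv ?_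
  rw [powLog, Real.rpow_sub_one ht0.ne', Real.rpow_sub_one hlog.ne']
  field_simp

theorem isTimeScale_powLog (r s : ℝ) : IsTimeScale (powLog r s) 3 (|r| + |s|) where
  contDiffOn t ht := by
    have ht : (3 : ℝ) < t := ht
    have hlog := one_le_log ht
    exact ((Real.contDiffAt_rpow_const_of_ne (by positivity)).mul
      ((Real.contDiffAt_log.2 (by positivity)).rpow_const_of_ne (by positivity))).contDiffWithinAt
  pos t ht := powLog_pos (by linarith) r s
  abs_deriv_le t ht := by
    have ht0 : 0 < t := three_pos.trans ht
    have hpos := powLog_pos (show 1 < t by linarith) r s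
    rw [(hasDerivAt_powLog (by linarith) r s).deriv, abs_mul, abs_of_pos hpos]
    refine mul_le_mul_of_nonneg_right ((abs_add_le _ _).trans ?_) hpos.le
    rw [add_div, abs_div, abs_div, abs_of_pos ht0, abs_of_pos
      (mul_pos ht0 (one_pos.trans_le (one_le_log ht)))]
    gcongr
    exact le_mul_of_one_le_right ht0.le (one_le_log ht)

theorem exists_powLog_le_rpow {r r' : ℝ} (hr : r < r') (s : ℝ) :
    ∃ C, ∀ t > 3, powLog r s t ≤ C * t ^ r' := by
  set σ := |s| + 1
  have hσ : 0 < σ := by positivity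
  set ε := (r' - r) / σ
  have hε : 0 < ε := div_pos (sub_pos.2 hr) hσ
  refine ⟨(ε ^ σ)⁻¹, fun t ht => ?_⟩
  have ht0 : 0 < t := by linarith
  have hlog := one_le_log ht
  calc powLog r s t ≤ t ^ r * Real.log t ^ σ := by
        refine mul_le_mul_of_nonneg_left (Real.rpow_le_rpow_of_exponent_le hlog ?_) (by positivity)
        linarith [le_abs_self s]
    _ ≤ t ^ r * (t ^ ε / ε) ^ σ := by
        gcongr
        exact Real.log_le_rpow_div ht0.le hε
    _ = (ε ^ σ)⁻¹ * (t ^ r * t ^ (r' - r)) := by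
        rw [Real.div_rpow (by positivity) hε.le, ← Real.rpow_mul ht0.le, div_mul_cancel₀ _ hσ.ne']
        ring
    _ = (ε ^ σ)⁻¹ * t ^ r' := by rw [← Real.rpow_add ht0, add_sub_cancel]

theorem exists_virialScaling_decay {p c d κ : ℝ} (s q : ℝ) (hc : 0 < c) (hd₀ : 0 < d)
    (hd : p + κ < d) (hd' : p + d / 2 + κ < 1) (hdp : d / 2 + κ < 2 * p) : ∃ C, ∀ t > 3,
      powLog (p - 1) s t * ((√(powLog (-d) 0 t))⁻¹ *
        (t⁻¹ + (c * powLog (-p) q t + powLog (-d) 0 t) ^ 3) + powLog (-d) 0 t) ≤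
          C * t ^ (-1 - κ) := by
  obtain ⟨C₁, h₁⟩ := exists_powLog_le_rpow
    (show p - 1 + -(-d / 2) + -1 < -1 - κ by linarith) (s + 0 + 0)
  obtain ⟨C₂, h₂⟩ := exists_powLog_le_rpow
    (show p - 1 + -(-d / 2) + 3 * -p < -1 - κ by linarith) (s + 0 + 3 * q)
  obtain ⟨C₃, h₃⟩ := exists_powLog_le_rpow
    (show p - 1 + -(-d / 2) + 3 * -d < -1 - κ by linarith) (s + 0 + 3 * 0)
  obtain ⟨C₄, h₄⟩ := exists_powLog_le_rpow (show p - 1 + -d < -1 - κ by linarith) (s + 0)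
  refine ⟨C₁ + 4 * (c ^ 3 * C₂ + C₃) + C₄, fun t ht => ?_⟩
  have ht1 : 1 < t := by linarith
  have hcube : (c * powLog (-p) q t + powLog (-d) 0 t) ^ 3 ≤
      4 * (c ^ 3 * powLog (3 * -p) (3 * q) t + powLog (3 * -d) (3 * 0) t) := by
    rw [← powLog_pow_three ht1, ← powLog_pow_three ht1, ← mul_pow]
    exact (add_pow_le (mul_pos hc (powLog_pos ht1 _ _)).le (powLog_pos ht1 _ _).le 3).trans_eq
      (by norm_num)
  have hinv : t⁻¹ = powLog (-1) 0 t := by rw [powLog_zero_right, Real.rpow_neg_one]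
  have hX := powLog_pos ht1 (-(-d / 2)) 0
  have hh := powLog_pos ht1 (p - 1) s
  calc powLog (p - 1) s t * ((√(powLog (-d) 0 t))⁻¹ *
        (t⁻¹ + (c * powLog (-p) q t + powLog (-d) 0 t) ^ 3) + powLog (-d) 0 t)
      ≤ powLog (p - 1) s t * (powLog (-(-d / 2)) 0 t * (powLog (-1) 0 t +
          4 * (c ^ 3 * powLog (3 * -p) (3 * q) t + powLog (3 * -d) (3 * 0) t)) +
            powLog (-d) 0 t) := by
        rw [inv_sqrt_powLog_zero_right ht1, hinv]
        gcongr
    _ = powLog (p - 1) s t * powLog (-(-d / 2)) 0 t * powLog (-1) 0 t +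
        4 * (c ^ 3 * (powLog (p - 1) s t * powLog (-(-d / 2)) 0 t * powLog (3 * -p) (3 * q) t) +
          powLog (p - 1) s t * powLog (-(-d / 2)) 0 t * powLog (3 * -d) (3 * 0) t) +
        powLog (p - 1) s t * powLog (-d) 0 t := by ring
    _ ≤ C₁ * t ^ (-1 - κ) + 4 * (c ^ 3 * (C₂ * t ^ (-1 - κ)) + C₃ * t ^ (-1 - κ)) +
        C₄ * t ^ (-1 - κ) := by
        simp only [powLog_mul_powLog ht1]
        gcongr
        exacts [h₁ t ht, h₂ t ht, h₃ t ht, h₄ t ht]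
    _ = (C₁ + 4 * (c ^ 3 * C₂ + C₃) + C₄) * t ^ (-1 - κ) := by ring

theorem exists_isVirialScaling {p c : ℝ} (s q : ℝ) (hp : 0 < p) (hp' : p < 2 / 3) (hc : 0 < c) :
    ∃ b k κ, IsVirialScaling (powLog (p - 1) s) (fun t => c * powLog (-p) q t) b 3 k κ := by
  set δ := min p (2 - 3 * p)
  have hδ : 0 < δ := lt_min hp (by linarith)
  have hδ₁ : δ ≤ p := min_le_left _ _
  have hδ₂ : δ ≤ 2 - 3 * p := min_le_right _ _
  set d := p + δ / 2 with hd
  obtain ⟨C, hC⟩ := exists_virialScaling_decay (p := p) (d := d) (κ := δ / 8) s q hc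
    (by linarith) (by linarith) (by linarith) (by linarith)
  have hk₁ : 0 ≤ |p - 1| + |s| := by positivity
  have hk₂ : 0 ≤ |-p| + |q| := by positivity
  have hk₃ : 0 ≤ |-d| + |(0 : ℝ)| := by positivity
  have hC₀ := abs_nonneg C
  exact ⟨powLog (-d) 0, 1 + |C| + (|p - 1| + |s|) + (|-p| + |q|) + (|-d| + |0|), δ / 8,
    { one_le_time := by norm_num
      one_le_const := by linarith
      rate_pos := by positivity
      amplitude := (isTimeScale_powLog _ _).mono (by norm_num) (by linarith)
      inner := ((isTimeScale_powLog _ _).const_mul hc).mono (by norm_num) (by linarith)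
      outer := (isTimeScale_powLog _ _).mono (by norm_num) (by linarith)
      outer_le_one := fun t ht => by
        rw [powLog_zero_right]
        exact Real.rpow_le_one_of_one_le_of_nonpos (by linarith) (by linarith)
      decay := fun t ht => (hC t ht).trans
        (mul_le_mul_of_nonneg_right (by linarith [le_abs_self C])
          (Real.rpow_nonneg (by linarith) _)) }⟩

end PowLog

section LocalLaws

theorem spaceDeriv_const_mul (c : ℝ) (F : ℝ → ℝ → ℝ) :
    ∂ₓ (fun t x => c * F t x) = fun t x => c * ∂ₓ F t x :=
  funext₂ fun _ _ => deriv_const_mul_field _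

theorem spaceDeriv_add {F G : ℝ → ℝ → ℝ} (hF : ContDiff ℝ ∞ ↿F) (hG : ContDiff ℝ ∞ ↿G) :
    ∂ₓ (fun t x => F t x + G t x) = fun t x => ∂ₓ F t x + ∂ₓ G t x :=
  funext₂ fun t x => ((hasDerivAt_space hF t x).add (hasDerivAt_space hG t x)).deriv

theorem third_spaceDeriv_add {F G : ℝ → ℝ → ℝ} (hF : ContDiff ℝ ∞ ↿F) (hG : ContDiff ℝ ∞ ↿G) :
    ∂ₓ ∂ₓ ∂ₓ (fun t x => F t x + G t x) = fun t x => ∂ₓ ∂ₓ ∂ₓ F t x + ∂ₓ ∂ₓ ∂ₓ G t x := by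
  have hF' := contDiff_spaceDeriv hF
  have hG' := contDiff_spaceDeriv hG
  rw [spaceDeriv_add hF hG, spaceDeriv_add hF' hG',
    spaceDeriv_add (contDiff_spaceDeriv hF') (contDiff_spaceDeriv hG')]

namespace IsConservationLaw

variable {m S P m' S' P' : ℝ → ℝ → ℝ}

theorem const_mul (c : ℝ) (h : IsConservationLaw m S P) : IsConservationLaw
    (fun t x => c * m t x) (fun t x => c * S t x) (fun t x => c * P t x) where
  contDiff_density := contDiff_const.mul h.contDiff_density
  contDiff_dispersion := contDiff_const.mul h.contDiff_dispersion
  contDiff_flux := contDiff_const.mul h.contDiff_flux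
  law t x := by
    have hm : ∂ₜ (fun t x => c * m t x) t x = c * ∂ₜ m t x := deriv_const_mul_field _
    rw [hm]
    simp only [spaceDeriv_const_mul]
    linear_combination c * h.law t x

theorem add (h : IsConservationLaw m S P) (h' : IsConservationLaw m' S' P') : IsConservationLaw
    (fun t x => m t x + m' t x) (fun t x => S t x + S' t x) (fun t x => P t x + P' t x) where
  contDiff_density := h.contDiff_density.add h'.contDiff_density
  contDiff_dispersion := h.contDiff_dispersion.add h'.contDiff_dispersion
  contDiff_flux := h.contDiff_flux.add h'.contDiff_flux
  law t x := by
    have hm : ∂ₜ (fun t x => m t x + m' t x) t x = ∂ₜ m t x + ∂ₜ m' t x :=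
      ((hasDerivAt_time h.contDiff_density t x).add
        (hasDerivAt_time h'.contDiff_density t x)).deriv
    rw [hm, third_spaceDeriv_add h.contDiff_dispersion h'.contDiff_dispersion,
      spaceDeriv_add h.contDiff_flux h'.contDiff_flux]
    linear_combination h.law t x + h'.law t x

end IsConservationLaw

theorem spaceDeriv_sq {F : ℝ → ℝ → ℝ} (hF : ContDiff ℝ ∞ ↿F) (t x : ℝ) :
    ∂ₓ (fun t x => F t x ^ 2) t x = 2 * F t x * ∂ₓ F t x :=
  ((hasDerivAt_space hF t x).fun_pow 2).deriv.trans (by norm_num)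

theorem third_spaceDeriv_sq {F : ℝ → ℝ → ℝ} (hF : ContDiff ℝ ∞ ↿F) (t x : ℝ) :
    ∂ₓ ∂ₓ ∂ₓ (fun t x => F t x ^ 2) t x =
      2 * F t x * ∂ₓ ∂ₓ ∂ₓ F t x + 6 * ∂ₓ F t x * ∂ₓ ∂ₓ F t x := by
  have hF' := contDiff_spaceDeriv hF
  have hF'' := contDiff_spaceDeriv hF'
  have first : ∂ₓ (fun t x => F t x ^ 2) = fun t x => 2 * F t x * ∂ₓ F t x :=
    funext₂ (spaceDeriv_sq hF)
  have second : ∂ₓ (fun t x => 2 * F t x * ∂ₓ F t x) =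
      fun t x => 2 * ∂ₓ F t x ^ 2 + 2 * F t x * ∂ₓ ∂ₓ F t x := funext₂ fun t x =>
    (((hasDerivAt_space hF t x).const_mul 2).fun_mul (hasDerivAt_space hF' t x)).deriv.trans
      (by ring)
  rw [first, second]
  exact (((hasDerivAt_space hF' t x).fun_pow 2).const_mul 2 |>.fun_add
    (((hasDerivAt_space hF t x).const_mul 2).fun_mul (hasDerivAt_space hF'' t x))).deriv.trans
      (by norm_num; ring)

/-- The Schrödinger–Korteweg–de Vries system written in terms of the real part `f` and the
imaginary part `g` of the Schrödinger component. -/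
structure IsRealSKdVSolution (α β γ : ℝ) (f g v : ℝ → ℝ → ℝ) : Prop where
  contDiff_re : ContDiff ℝ ∞ ↿f
  contDiff_im : ContDiff ℝ ∞ ↿g
  contDiff_kdv : ContDiff ℝ ∞ ↿v
  timeDeriv_re : ∂ₜ f = fun t x => (α * v t x + β * (f t x ^ 2 + g t x ^ 2)) * g t x - ∂ₓ ∂ₓ g t x
  timeDeriv_im : ∂ₜ g = fun t x => ∂ₓ ∂ₓ f t x - (α * v t x + β * (f t x ^ 2 + g t x ^ 2)) * f t x
  timeDeriv_kdv : ∂ₜ v = fun t x => γ * (2 * f t x * ∂ₓ f t x + 2 * g t x * ∂ₓ g t x) -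
    ∂ₓ ∂ₓ ∂ₓ v t x - v t x * ∂ₓ v t x

/-- The non-dispersive flux of the conserved momentum density `αv² - 2γ Im(ū ∂ₓu)`, where
`u = f + ig`. -/
noncomputable def momentumFlux (α β γ : ℝ) (f g v : ℝ → ℝ → ℝ) (t x : ℝ) : ℝ :=
  -3 * α * ∂ₓ v t x ^ 2 - 4 * γ * (∂ₓ f t x ^ 2 + ∂ₓ g t x ^ 2) + 2 * α / 3 * v t x ^ 3 -
    γ * β * (f t x ^ 2 + g t x ^ 2) ^ 2 - 2 * α * γ * (v t x * (f t x ^ 2 + g t x ^ 2))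

namespace IsRealSKdVSolution

variable {α β γ : ℝ} {f g v : ℝ → ℝ → ℝ}

theorem massLaw (h : IsRealSKdVSolution α β γ f g v) : IsConservationLaw v v
    (fun t x => v t x ^ 2 / 2 - γ * (f t x ^ 2 + g t x ^ 2)) where
  contDiff_density := h.contDiff_kdv
  contDiff_dispersion := h.contDiff_kdv
  contDiff_flux :=
    have := h.contDiff_re
    have := h.contDiff_im
    have := h.contDiff_kdv
    show ContDiff ℝ ∞ fun p : ℝ × ℝ => v p.1 p.2 ^ 2 / 2 - γ * (f p.1 p.2 ^ 2 + g p.1 p.2 ^ 2) by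
      fun_prop
  law t x := by
    have flux : ∂ₓ (fun t x => v t x ^ 2 / 2 - γ * (f t x ^ 2 + g t x ^ 2)) t x =
        v t x * ∂ₓ v t x - γ * (2 * f t x * ∂ₓ f t x + 2 * g t x * ∂ₓ g t x) :=
      ((((hasDerivAt_space h.contDiff_kdv t x).fun_pow 2).div_const 2).fun_sub
        ((((hasDerivAt_space h.contDiff_re t x).fun_pow 2).fun_add
          ((hasDerivAt_space h.contDiff_im t x).fun_pow 2)).const_mul γ)).deriv.trans
        (by norm_num; ring)
    rw [flux, h.timeDeriv_kdv]
    ring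

theorem timeDeriv_momentum (h : IsRealSKdVSolution α β γ f g v) (t x : ℝ) :
    ∂ₜ (fun t x => f t x * ∂ₓ g t x - g t x * ∂ₓ f t x) t x =
      f t x * ∂ₓ ∂ₓ ∂ₓ f t x + g t x * ∂ₓ ∂ₓ ∂ₓ g t x -
        ∂ₓ f t x * ∂ₓ ∂ₓ f t x - ∂ₓ g t x * ∂ₓ ∂ₓ g t x -
        (f t x ^ 2 + g t x ^ 2) *
          (α * ∂ₓ v t x + β * (2 * f t x * ∂ₓ f t x + 2 * g t x * ∂ₓ g t x)) := by
  have hf := hasDerivAt_space h.contDiff_re t x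
  have hg := hasDerivAt_space h.contDiff_im t x
  have hf' := contDiff_spaceDeriv h.contDiff_re
  have hg' := contDiff_spaceDeriv h.contDiff_im
  set Q : ℝ → ℝ := fun y => α * v t y + β * (f t y ^ 2 + g t y ^ 2)
  set Q' := α * ∂ₓ v t x + β * (2 * f t x * ∂ₓ f t x + 2 * g t x * ∂ₓ g t x) with hQ'
  have potential : HasDerivAt Q Q' x :=
    (((hasDerivAt_space h.contDiff_kdv t x).const_mul α).fun_add
      (((hf.fun_pow 2).fun_add (hg.fun_pow 2)).const_mul β)).congr_deriv (by norm_num [hQ'])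
  have hft : ∂ₜ (∂ₓ f) t x = Q' * g t x + Q x * ∂ₓ g t x - ∂ₓ ∂ₓ ∂ₓ g t x := by
    rw [timeDeriv_spaceDeriv h.contDiff_re, h.timeDeriv_re]
    exact ((potential.fun_mul hg).fun_sub
      (hasDerivAt_space (contDiff_spaceDeriv hg') t x)).deriv
  have hgt : ∂ₜ (∂ₓ g) t x = ∂ₓ ∂ₓ ∂ₓ f t x - (Q' * f t x + Q x * ∂ₓ f t x) := by
    rw [timeDeriv_spaceDeriv h.contDiff_im, h.timeDeriv_im]
    exact ((hasDerivAt_space (contDiff_spaceDeriv hf') t x).fun_sub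
      (potential.fun_mul hf)).deriv
  refine (((hasDerivAt_time h.contDiff_re t x).fun_mul (hasDerivAt_time hg' t x)).fun_sub
    ((hasDerivAt_time h.contDiff_im t x).fun_mul (hasDerivAt_time hf' t x))).deriv.trans ?_
  rw [hft, hgt, h.timeDeriv_re, h.timeDeriv_im]
  ring

theorem spaceDeriv_momentumFlux (h : IsRealSKdVSolution α β γ f g v) (t x : ℝ) :
    ∂ₓ (momentumFlux α β γ f g v) t x =
      -6 * α * ∂ₓ v t x * ∂ₓ ∂ₓ v t x -
        8 * γ * (∂ₓ f t x * ∂ₓ ∂ₓ f t x + ∂ₓ g t x * ∂ₓ ∂ₓ g t x) +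
        2 * α * v t x ^ 2 * ∂ₓ v t x -
        2 * γ * β * (f t x ^ 2 + g t x ^ 2) * (2 * f t x * ∂ₓ f t x + 2 * g t x * ∂ₓ g t x) -
        2 * α * γ * (∂ₓ v t x * (f t x ^ 2 + g t x ^ 2) +
          v t x * (2 * f t x * ∂ₓ f t x + 2 * g t x * ∂ₓ g t x)) := by
  have hv := hasDerivAt_space h.contDiff_kdv t x
  have deriv_sq : ∀ {F : ℝ → ℝ → ℝ}, ContDiff ℝ ∞ ↿F →
      HasDerivAt (fun x => F t x ^ 2) (2 * F t x * ∂ₓ F t x) x := fun hF =>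
    ((hasDerivAt_space hF t x).fun_pow 2).congr_deriv (by norm_num)
  have deriv_mass := (deriv_sq h.contDiff_re).fun_add (deriv_sq h.contDiff_im)
  have deriv_energy := (deriv_sq (contDiff_spaceDeriv h.contDiff_re)).fun_add
    (deriv_sq (contDiff_spaceDeriv h.contDiff_im))
  refine ((((((deriv_sq (contDiff_spaceDeriv h.contDiff_kdv)).const_mul (-3 * α)).fun_sub
    (deriv_energy.const_mul (4 * γ))).fun_add ((hv.fun_pow 3).const_mul (2 * α / 3))).fun_sub
    ((deriv_mass.fun_pow 2).const_mul (γ * β))).fun_sub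
    ((hv.fun_mul deriv_mass).const_mul (2 * α * γ))).deriv.trans ?_
  norm_num
  ring

theorem momentumLaw (h : IsRealSKdVSolution α β γ f g v) : IsConservationLaw
    (fun t x => α * v t x ^ 2 - 2 * γ * (f t x * ∂ₓ g t x - g t x * ∂ₓ f t x))
    (fun t x => α * v t x ^ 2 + γ * (f t x ^ 2 + g t x ^ 2)) (momentumFlux α β γ f g v) := by
  have hf := h.contDiff_re
  have hg := h.contDiff_im
  have hv := h.contDiff_kdv
  have hf' := contDiff_spaceDeriv hf
  have hg' := contDiff_spaceDeriv hg
  have hv' := contDiff_spaceDeriv hv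
  have hmomentum : ContDiff ℝ ∞ ↿(fun t x => f t x * ∂ₓ g t x - g t x * ∂ₓ f t x) :=
    (hf.mul hg').sub (hg.mul hf')
  have hflux : ContDiff ℝ ∞ ↿(momentumFlux α β γ f g v) := by
    change ContDiff ℝ ∞ fun p : ℝ × ℝ => momentumFlux α β γ f g v p.1 p.2
    unfold momentumFlux
    fun_prop
  refine ⟨(contDiff_const.mul (hv.pow 2)).sub (contDiff_const.mul hmomentum),
    (contDiff_const.mul (hv.pow 2)).add (contDiff_const.mul ((hf.pow 2).add (hg.pow 2))), hflux,
    fun t x => ?_⟩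
  have density := ((((hasDerivAt_time hv t x).fun_pow 2).const_mul α).fun_sub
    ((hasDerivAt_time hmomentum t x).const_mul (2 * γ))).deriv
  have dispersion : ∂ₓ ∂ₓ ∂ₓ (fun t x => α * v t x ^ 2 + γ * (f t x ^ 2 + g t x ^ 2)) t x =
      α * ∂ₓ ∂ₓ ∂ₓ (fun t x => v t x ^ 2) t x + γ * (∂ₓ ∂ₓ ∂ₓ (fun t x => f t x ^ 2) t x +
        ∂ₓ ∂ₓ ∂ₓ (fun t x => g t x ^ 2) t x) := by
    rw [third_spaceDeriv_add (F := fun t x => α * v t x ^ 2)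
      (G := fun t x => γ * (f t x ^ 2 + g t x ^ 2)) (contDiff_const.mul (hv.pow 2))
      (contDiff_const.mul ((hf.pow 2).add (hg.pow 2)))]
    simp only [spaceDeriv_const_mul]
    rw [third_spaceDeriv_add (hf.pow 2) (hg.pow 2)]
  rw [dispersion, third_spaceDeriv_sq hv, third_spaceDeriv_sq hf, third_spaceDeriv_sq hg,
    h.spaceDeriv_momentumFlux]
  refine (congrArg (· + _ + _) density).trans ?_
  rw [h.timeDeriv_momentum, h.timeDeriv_kdv]
  norm_num
  ring

end IsRealSKdVSolution

/-- The `H¹` energy density of `u = f + ig` and `v`. -/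
noncomputable def energyDensity (f g v : ℝ → ℝ → ℝ) (t x : ℝ) : ℝ :=
  f t x ^ 2 + g t x ^ 2 + (∂ₓ f t x ^ 2 + ∂ₓ g t x ^ 2) + v t x ^ 2 + ∂ₓ v t x ^ 2

variable {f g v : ℝ → ℝ → ℝ}

theorem energyDensity_nonneg (t x : ℝ) : 0 ≤ energyDensity f g v t x := by
  unfold energyDensity; positivity

theorem sq_le_energyDensity (t x : ℝ) : v t x ^ 2 ≤ energyDensity f g v t x := by
  unfold energyDensity
  linarith [show 0 ≤ f t x ^ 2 + g t x ^ 2 + (∂ₓ f t x ^ 2 + ∂ₓ g t x ^ 2) + ∂ₓ v t x ^ 2 by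
    positivity]

theorem abs_two_mul_momentum_le_energyDensity (t x : ℝ) :
    |-2 * (f t x * ∂ₓ g t x - g t x * ∂ₓ f t x)| ≤ energyDensity f g v t x := by
  unfold energyDensity
  rw [abs_le]
  constructor <;>
    linarith [sq_nonneg (f t x + ∂ₓ g t x), sq_nonneg (f t x - ∂ₓ g t x),
      sq_nonneg (g t x + ∂ₓ f t x), sq_nonneg (g t x - ∂ₓ f t x), sq_nonneg (v t x),
      sq_nonneg (∂ₓ v t x)]

/-- The multiple of the mass law that has to be added to the momentum law to make the flux
coercive, for solutions with `|v| ≤ M` and `|u| ≤ M`. -/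
noncomputable def massMultiplier (α β M : ℝ) : ℝ := 2 * |α| * M + |β| * M ^ 2

theorem massMultiplier_nonneg {M : ℝ} (α β : ℝ) (hM : 0 ≤ M) : 0 ≤ massMultiplier α β M := by
  unfold massMultiplier; positivity

theorem zero_le_massMultiplier_mul_add {α β γ M w ρ : ℝ} (hγ : γ ≤ 0)
    (hw : |w| ≤ M) (hρ : 0 ≤ ρ) (hρM : ρ ≤ M ^ 2) :
    0 ≤ massMultiplier α β M * (w ^ 2 / 2 - γ * ρ) + 2 * α / 3 * w ^ 3 - γ * β * ρ ^ 2 -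
      2 * α * γ * (w * ρ) := by
  have hαw : |α * w| ≤ |α| * M := by rw [abs_mul]; gcongr
  have hβρ : |β * ρ| ≤ |β| * M ^ 2 := by rw [abs_mul, abs_of_nonneg hρ]; gcongr
  have hw2 : 0 ≤ |β| * M ^ 2 * w ^ 2 := by positivity
  have cubic : 0 ≤ (|α| * M + α * w) * w ^ 2 :=
    mul_nonneg (by linarith [neg_le_of_abs_le hαw]) (sq_nonneg w)
  have cubic' : 0 ≤ |α| * M * w ^ 2 := mul_nonneg ((abs_nonneg _).trans hαw) (sq_nonneg w)
  have mass : 0 ≤ -γ * ρ * (2 * (|α| * M + α * w) + (|β| * M ^ 2 + β * ρ)) :=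
    mul_nonneg (mul_nonneg (neg_nonneg.2 hγ) hρ)
      (by linarith [neg_le_of_abs_le hαw, neg_le_of_abs_le hβρ])
  unfold massMultiplier
  linarith

theorem le_massFlux_add_momentumFlux {α β γ M : ℝ} {t x : ℝ} (hγ : γ ≤ 0)
    (hv : |v t x| ≤ M) (hfg : f t x ^ 2 + g t x ^ 2 ≤ M ^ 2) :
    -3 * α * ∂ₓ v t x ^ 2 - 4 * γ * (∂ₓ f t x ^ 2 + ∂ₓ g t x ^ 2) ≤
      massMultiplier α β M * (v t x ^ 2 / 2 - γ * (f t x ^ 2 + g t x ^ 2)) +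
        momentumFlux α β γ f g v t x := by
  have := zero_le_massMultiplier_mul_add (α := α) (β := β) hγ hv
    (add_nonneg (sq_nonneg (f t x)) (sq_nonneg (g t x))) hfg
  unfold momentumFlux
  linarith

/-- A constant dominating the density, the dispersive part and the flux of the coercive
conservation law by the energy density. -/
noncomputable def fluxConstant (α β γ M : ℝ) : ℝ :=
  massMultiplier α β M * (1 + |γ|) + 3 * |α| + 4 * |γ| + |α| * M + |γ| * |β| * M ^ 2 +
    2 * |α| * |γ| * M

theorem massFlux_add_momentumFlux_le {α β γ M : ℝ} {t x : ℝ}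
    (hv : |v t x| ≤ M) (hfg : f t x ^ 2 + g t x ^ 2 ≤ M ^ 2) :
    massMultiplier α β M * (v t x ^ 2 / 2 - γ * (f t x ^ 2 + g t x ^ 2)) +
      momentumFlux α β γ f g v t x ≤ fluxConstant α β γ M * energyDensity f g v t x := by
  set ρ := f t x ^ 2 + g t x ^ 2
  have hρ0 : 0 ≤ ρ := by positivity
  have hM : 0 ≤ M := (abs_nonneg _).trans hv
  set e := energyDensity f g v t x
  have he' : e = ρ + (∂ₓ f t x ^ 2 + ∂ₓ g t x ^ 2) + v t x ^ 2 + ∂ₓ v t x ^ 2 := rfl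
  have hf' := sq_nonneg (∂ₓ f t x)
  have hg' := sq_nonneg (∂ₓ g t x)
  have hv' := sq_nonneg (∂ₓ v t x)
  have hv2 := sq_nonneg (v t x)
  have term : ∀ {c y z : ℝ}, 0 ≤ z → z ≤ e → |y| ≤ c → y * z ≤ c * e := fun hz hze hyc =>
    (mul_le_mul_of_nonneg_right ((le_abs_self _).trans hyc) hz).trans
      (mul_le_mul_of_nonneg_left hze ((abs_nonneg _).trans hyc))
  have kdv_mass : v t x ^ 2 / 2 - γ * ρ ≤ (1 + |γ|) * e := by
    linarith [term (c := |γ|) (y := -γ) hρ0 (by linarith) (abs_neg γ).le]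
  have kdv_gradient : -3 * α * ∂ₓ v t x ^ 2 ≤ 3 * |α| * e :=
    term hv' (by linarith) (by rw [abs_mul]; norm_num)
  have gradient : -4 * γ * (∂ₓ f t x ^ 2 + ∂ₓ g t x ^ 2) ≤ 4 * |γ| * e :=
    term (by linarith) (by linarith) (by rw [abs_mul]; norm_num)
  have cubic : 2 * α / 3 * v t x * v t x ^ 2 ≤ |α| * M * e := by
    refine term hv2 (by linarith) ?_
    rw [abs_mul]
    refine mul_le_mul ?_ hv (abs_nonneg _) (abs_nonneg _)
    rw [abs_div, abs_mul]
    norm_num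
    linarith [abs_nonneg α]
  have quartic : -γ * β * ρ * ρ ≤ |γ| * |β| * M ^ 2 * e := by
    refine term hρ0 (by linarith) ?_
    rw [abs_mul, abs_mul, abs_neg, abs_of_nonneg hρ0]
    gcongr
  have interaction : -2 * α * γ * v t x * ρ ≤ 2 * |α| * |γ| * M * e := by
    refine term hρ0 (by linarith) ?_
    simp only [abs_mul, abs_neg, Nat.abs_ofNat]
    gcongr
  have := mul_le_mul_of_nonneg_left kdv_mass (massMultiplier_nonneg α β hM)
  unfold momentumFlux fluxConstant
  linarith

theorem abs_massDensity_add_le {α β γ M w y e : ℝ} (hM : 0 ≤ M) (hw : w ^ 2 ≤ e) (hy : |y| ≤ e) :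
    |massMultiplier α β M * w + (α * w ^ 2 + γ * y)| ≤ fluxConstant α β γ M * (√e + e) := by
  have hK := massMultiplier_nonneg α β hM
  have he : 0 ≤ e := (abs_nonneg y).trans hy
  have mass_le : massMultiplier α β M ≤ fluxConstant α β γ M := by
    unfold fluxConstant
    have : 0 ≤ massMultiplier α β M * |γ| := by positivity
    have : 0 ≤ |α| * M + |γ| * |β| * M ^ 2 + 2 * |α| * |γ| * M := by positivity
    linarith [abs_nonneg α, abs_nonneg γ]
  have quadratic_le : |α| + |γ| ≤ fluxConstant α β γ M := by
    unfold fluxConstant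
    have : 0 ≤ massMultiplier α β M * (1 + |γ|) := by positivity
    have : 0 ≤ |α| * M + |γ| * |β| * M ^ 2 + 2 * |α| * |γ| * M := by positivity
    linarith [abs_nonneg α, abs_nonneg γ]
  calc |massMultiplier α β M * w + (α * w ^ 2 + γ * y)|
      ≤ massMultiplier α β M * |w| + (|α| * w ^ 2 + |γ| * |y|) := by
        refine (abs_add_le _ _).trans (add_le_add ?_ ((abs_add_le _ _).trans_eq ?_))
        · rw [abs_mul, abs_of_nonneg hK]
        · rw [abs_mul, abs_mul, abs_of_nonneg (sq_nonneg w)]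
    _ ≤ massMultiplier α β M * √e + (|α| * e + |γ| * e) := by
        gcongr
        exact Real.abs_le_sqrt hw
    _ ≤ fluxConstant α β γ M * √e + fluxConstant α β γ M * e := by
        rw [← add_mul]
        gcongr
    _ = fluxConstant α β γ M * (√e + e) := by ring

theorem IsRealSKdVSolution.isCoerciveConservationLaw {α β γ M E : ℝ}
    (h : IsRealSKdVSolution α β γ f g v) (hα : α ≤ 0) (hγ : γ ≤ 0) (hv : ∀ t x, |v t x| ≤ M)
    (hfg : ∀ t x, f t x ^ 2 + g t x ^ 2 ≤ M ^ 2)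
    (integrable : ∀ t, Integrable (energyDensity f g v t))
    (energy_le : ∀ t, ∫ x, energyDensity f g v t x ≤ E) :
    IsCoerciveConservationLaw
      (fun t x => massMultiplier α β M * v t x +
        (α * v t x ^ 2 - 2 * γ * (f t x * ∂ₓ g t x - g t x * ∂ₓ f t x)))
      (fun t x => massMultiplier α β M * v t x +
        (α * v t x ^ 2 + γ * (f t x ^ 2 + g t x ^ 2)))
      (fun t x => massMultiplier α β M * (v t x ^ 2 / 2 - γ * (f t x ^ 2 + g t x ^ 2)) +
        momentumFlux α β γ f g v t x)
      (energyDensity f g v) (fluxConstant α β γ M) E :=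
  have hM : 0 ≤ M := (abs_nonneg _).trans (hv 0 0)
  have kdv_le := sq_le_energyDensity (f := f) (g := g) (v := v)
  { (h.massLaw.const_mul (massMultiplier α β M)).add h.momentumLaw with
    const_nonneg := by
      have := massMultiplier_nonneg α β hM
      unfold fluxConstant; positivity
    energy_nonneg := energyDensity_nonneg
    integrable_energy := integrable
    integral_energy_le := energy_le
    abs_density_le := fun t x => by
      convert abs_massDensity_add_le hM (kdv_le t x) (abs_two_mul_momentum_le_energyDensity t x)
        using 3
      ring
    abs_dispersion_le := fun t x => abs_massDensity_add_le hM (kdv_le t x) (by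
      rw [abs_of_nonneg (by positivity)]
      unfold energyDensity
      linarith [show 0 ≤ ∂ₓ f t x ^ 2 + ∂ₓ g t x ^ 2 + v t x ^ 2 + ∂ₓ v t x ^ 2 by positivity])
    flux_nonneg := fun t x =>
      (show 0 ≤ -3 * α * ∂ₓ v t x ^ 2 - 4 * γ * (∂ₓ f t x ^ 2 + ∂ₓ g t x ^ 2) by
        have := mul_nonneg (neg_nonneg.2 hα) (sq_nonneg (∂ₓ v t x))
        have := mul_nonneg (neg_nonneg.2 hγ) (add_nonneg (sq_nonneg (∂ₓ f t x))
          (sq_nonneg (∂ₓ g t x)))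
        linarith).trans (le_massFlux_add_momentumFlux hγ (hv t x) (hfg t x))
    flux_le := fun t x => massFlux_add_momentumFlux_le (hv t x) (hfg t x) }

end LocalLaws

section RegularSolutions

theorem sq_norm_le_integral_sq_norm_add {E : Type*} [NormedAddCommGroup E] [InnerProductSpace ℝ E]
    {F F' : ℝ → E} (hF : ∀ x, HasDerivAt F (F' x) x) (hF₂ : MemLp F 2) (hF'₂ : MemLp F' 2) (x : ℝ) :
    ‖F x‖ ^ 2 ≤ (∫ y, ‖F y‖ ^ 2) + ∫ y, ‖F' y‖ ^ 2 := by
  have hI := hF₂.norm.integrable_sq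
  have hI' := hF'₂.norm.integrable_sq
  have deriv_sq : ∀ y, HasDerivAt (fun y => ‖F y‖ ^ 2) (2 * inner ℝ (F y) (F' y)) y :=
    fun y => (hF y).norm_sq
  have deriv_le : ∀ y, |2 * inner ℝ (F y) (F' y)| ≤ ‖F y‖ ^ 2 + ‖F' y‖ ^ 2 := fun y => by
    rw [abs_mul, abs_two]
    nlinarith [abs_real_inner_le_norm (F y) (F' y), two_mul_le_add_sq ‖F y‖ ‖F' y‖]
  have hint : Integrable fun y => 2 * inner ℝ (F y) (F' y) :=
    (hI.add hI').mono' ((hF₂.1.inner hF'₂.1).const_mul 2) (Eventually.of_forall deriv_le)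
  have vanishes : Tendsto (fun y => ‖F y‖ ^ 2) atBot (𝓝 0) :=
    tendsto_zero_of_hasDerivAt_of_integrableOn_Iic (a := x) (fun y _ => deriv_sq y)
      hint.integrableOn hI.integrableOn
  calc ‖F x‖ ^ 2 = ∫ y in Iic x, 2 * inner ℝ (F y) (F' y) := by
        rw [integral_Iic_of_hasDerivAt_of_tendsto' (fun y _ => deriv_sq y) hint.integrableOn
          vanishes, sub_zero]
    _ ≤ ∫ y in Iic x, (‖F y‖ ^ 2 + ‖F' y‖ ^ 2) :=
        integral_mono hint.restrict (hI.add hI').restrict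
          fun y => (le_abs_self _).trans (deriv_le y)
    _ ≤ ∫ y, (‖F y‖ ^ 2 + ‖F' y‖ ^ 2) :=
        setIntegral_le_integral (hI.add hI')
          (Eventually.of_forall fun y => (by positivity : (0 : ℝ) ≤ _))
    _ = (∫ y, ‖F y‖ ^ 2) + ∫ y, ‖F' y‖ ^ 2 := integral_add hI hI'

section CLM

variable {E G : Type*} [NormedAddCommGroup E] [NormedSpace ℝ E] [NormedAddCommGroup G]
  [NormedSpace ℝ G] {F : ℝ → ℝ → E}

theorem spaceDeriv_clm (L : E →L[ℝ] G) (hF : ContDiff ℝ ∞ ↿F) :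
    ∂ₓ (fun t x => L (F t x)) = fun t x => L (∂ₓ F t x) :=
  funext₂ fun t x => (L.hasFDerivAt.comp_hasDerivAt x (hasDerivAt_space hF t x)).deriv

theorem timeDeriv_clm (L : E →L[ℝ] G) (hF : ContDiff ℝ ∞ ↿F) :
    ∂ₜ (fun t x => L (F t x)) = fun t x => L (∂ₜ F t x) :=
  funext₂ fun t x => (L.hasFDerivAt.comp_hasDerivAt t (hasDerivAt_time hF t x)).deriv

end CLM

theorem memLp_two_of_schwartz {E : Type*} [NormedAddCommGroup E] [NormedSpace ℝ E]
    {w : ℝ → ℝ → E} (hw : ∀ t, ∃ φ : SchwartzMap ℝ E, ∀ x, φ x = w t x) (t : ℝ) :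
    MemLp (w t) 2 ∧ MemLp (∂ₓ w t) 2 := by
  obtain ⟨φ, hφ⟩ := hw t
  rw [show w t = φ from (funext hφ).symm,
    show ∂ₓ w t = SchwartzMap.derivCLM ℝ E φ from congrArg deriv (funext hφ).symm]
  exact ⟨φ.memLp 2, (SchwartzMap.derivCLM ℝ E φ).memLp 2⟩

theorem sq_norm_eq_re_sq_add_im_sq (z : ℂ) : ‖z‖ ^ 2 = z.re ^ 2 + z.im ^ 2 := by
  rw [Complex.sq_norm, Complex.normSq_apply, sq, sq]

namespace IsSKdVSolution

variable {α β γ : ℝ} {u : ℝ → ℝ → ℂ} {v : ℝ → ℝ → ℝ}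

theorem spaceDeriv_re (h : IsSKdVSolution α β γ u v) :
    ∂ₓ (fun t x => (u t x).re) = fun t x => (∂ₓ u t x).re :=
  spaceDeriv_clm Complex.reCLM h.1

theorem spaceDeriv_im (h : IsSKdVSolution α β γ u v) :
    ∂ₓ (fun t x => (u t x).im) = fun t x => (∂ₓ u t x).im :=
  spaceDeriv_clm Complex.imCLM h.1

theorem schrodinger (h : IsSKdVSolution α β γ u v) (t x : ℝ) :
    Complex.I * ∂ₜ u t x + ∂ₓ ∂ₓ u t x =
      ((α * v t x + β * ((u t x).re ^ 2 + (u t x).im ^ 2) : ℝ) : ℂ) * u t x := by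
  have e := h.2.2.2.2.1 t x
  rw [iteratedDeriv_succ, iteratedDeriv_one, ← Complex.ofReal_pow, sq_norm_eq_re_sq_add_im_sq] at e
  refine e.trans ?_
  push_cast
  ring

theorem isRealSKdVSolution (h : IsSKdVSolution α β γ u v) :
    IsRealSKdVSolution α β γ (fun t x => (u t x).re) (fun t x => (u t x).im) v := by
  have hre := h.spaceDeriv_re
  have him := h.spaceDeriv_im
  have hschrodinger := h.schrodinger
  obtain ⟨hu, hv, -, -, -, kdv, -⟩ := h
  have hu' := contDiff_spaceDeriv hu
  have hf : ContDiff ℝ ∞ ↿fun t x => (u t x).re := Complex.reCLM.contDiff.comp hu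
  have hg : ContDiff ℝ ∞ ↿fun t x => (u t x).im := Complex.imCLM.contDiff.comp hu
  refine ⟨hf, hg, hv, ?_, ?_, ?_⟩
  · have htime : ∂ₜ (fun t x => (u t x).re) = _ := timeDeriv_clm Complex.reCLM hu
    have hspace : ∂ₓ (fun t x => (∂ₓ u t x).im) = _ := spaceDeriv_clm Complex.imCLM hu'
    rw [htime, him, hspace]
    ext t x
    have := congrArg Complex.im (hschrodinger t x)
    simp only [Complex.add_im, Complex.I_mul_im, Complex.im_ofReal_mul] at this
    simp only [Complex.imCLM_apply, Complex.reCLM_apply]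
    linarith
  · have htime : ∂ₜ (fun t x => (u t x).im) = _ := timeDeriv_clm Complex.imCLM hu
    have hspace : ∂ₓ (fun t x => (∂ₓ u t x).re) = _ := spaceDeriv_clm Complex.reCLM hu'
    rw [htime, hre, hspace]
    ext t x
    have := congrArg Complex.re (hschrodinger t x)
    simp only [Complex.add_re, Complex.I_mul_re, Complex.re_ofReal_mul] at this
    simp only [Complex.imCLM_apply, Complex.reCLM_apply]
    linarith
  · ext t x
    have e := kdv t x
    simp_rw [sq_norm_eq_re_sq_add_im_sq] at e
    rw [((hasDerivAt_space hf t x).fun_pow 2 |>.fun_add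
      ((hasDerivAt_space hg t x).fun_pow 2)).deriv, iteratedDeriv_succ, iteratedDeriv_succ,
      iteratedDeriv_one] at e
    change ∂ₜ v t x + ∂ₓ ∂ₓ ∂ₓ v t x + v t x * ∂ₓ v t x = _ at e
    norm_num at e
    linarith

theorem energyDensity_eq (h : IsSKdVSolution α β γ u v) :
    energyDensity (fun t x => (u t x).re) (fun t x => (u t x).im) v =
      fun t x => ‖u t x‖ ^ 2 + ‖∂ₓ u t x‖ ^ 2 + v t x ^ 2 + ∂ₓ v t x ^ 2 := by
  ext t x
  simp only [energyDensity, h.spaceDeriv_re, h.spaceDeriv_im, sq_norm_eq_re_sq_add_im_sq]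

theorem memLp_schrodinger (h : IsSKdVSolution α β γ u v) (t : ℝ) :
    MemLp (u t) 2 ∧ MemLp (∂ₓ u t) 2 :=
  memLp_two_of_schwartz h.2.2.1 t

theorem memLp_kdv (h : IsSKdVSolution α β γ u v) (t : ℝ) : MemLp (v t) 2 ∧ MemLp (∂ₓ v t) 2 :=
  memLp_two_of_schwartz h.2.2.2.1 t

theorem integrable_energyDensity (h : IsSKdVSolution α β γ u v) (t : ℝ) :
    Integrable (energyDensity (fun t x => (u t x).re) (fun t x => (u t x).im) v t) := by
  obtain ⟨hu, hu'⟩ := h.memLp_schrodinger t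
  obtain ⟨hv, hv'⟩ := h.memLp_kdv t
  rw [h.energyDensity_eq]
  exact ((hu.norm.integrable_sq.add hu'.norm.integrable_sq).add hv.integrable_sq).add
    hv'.integrable_sq

theorem integral_energyDensity (h : IsSKdVSolution α β γ u v) (t : ℝ) :
    ∫ x, energyDensity (fun t x => (u t x).re) (fun t x => (u t x).im) v t x =
      (∫ x, ‖u t x‖ ^ 2) + (∫ x, ‖∂ₓ u t x‖ ^ 2) + (∫ x, v t x ^ 2) + ∫ x, ∂ₓ v t x ^ 2 := by
  obtain ⟨hu, hu'⟩ := h.memLp_schrodinger t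
  obtain ⟨hv, hv'⟩ := h.memLp_kdv t
  have hI := hu.norm.integrable_sq
  have hI' := hu'.norm.integrable_sq
  have hI₂ : Integrable fun x => ‖u t x‖ ^ 2 + ‖∂ₓ u t x‖ ^ 2 := hI.add hI'
  have hI₃ : Integrable fun x => ‖u t x‖ ^ 2 + ‖∂ₓ u t x‖ ^ 2 + v t x ^ 2 :=
    hI₂.add hv.integrable_sq
  rw [h.energyDensity_eq, integral_add hI₃ hv'.integrable_sq, integral_add hI₂ hv.integrable_sq,
    integral_add hI hI']

theorem exists_energy_bound (h : IsSKdVSolution α β γ u v) : ∃ E, ∀ t,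
    ∫ x, energyDensity (fun t x => (u t x).re) (fun t x => (u t x).im) v t x ≤ E ∧
      ∀ x, ‖u t x‖ ^ 2 ≤ E ∧ v t x ^ 2 ≤ E := by
  have ⟨E, hE⟩ := h.2.2.2.2.2.2
  refine ⟨E, fun t => ⟨(h.integral_energyDensity t).trans_le (hE t), fun x => ?_⟩⟩
  obtain ⟨hu, hu'⟩ := h.memLp_schrodinger t
  obtain ⟨hv, hv'⟩ := h.memLp_kdv t
  have sobolev_u := sq_norm_le_integral_sq_norm_add (hasDerivAt_space h.1 t) hu hu' x
  have sobolev_v := sq_norm_le_integral_sq_norm_add (hasDerivAt_space h.2.1 t) hv hv' x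
  simp only [Real.norm_eq_abs, sq_abs] at sobolev_v
  have nonneg : ∀ w : ℝ → ℝ, 0 ≤ ∫ x, w x ^ 2 := fun w => integral_nonneg fun x => sq_nonneg (w x)
  have energy_le : (∫ x, ‖u t x‖ ^ 2) + (∫ x, ‖∂ₓ u t x‖ ^ 2) + (∫ x, v t x ^ 2) +
      (∫ x, ∂ₓ v t x ^ 2) ≤ E := hE t
  constructor
  · linarith [nonneg (v t), nonneg (∂ₓ v t)]
  · linarith [nonneg fun x => ‖u t x‖, nonneg fun x => ‖∂ₓ u t x‖]

theorem exists_isCoerciveConservationLaw (h : IsSKdVSolution α β γ u v) (hα : α < 0)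
    (hγ : γ < 0) : ∃ m S P e A E B, IsCoerciveConservationLaw m S P e A E ∧
      ∀ t x, ‖∂ₓ u t x‖ ^ 2 + ∂ₓ v t x ^ 2 ≤ B * P t x := by
  obtain ⟨E, hE⟩ := h.exists_energy_bound
  have hE₀ : 0 ≤ E := (sq_nonneg _).trans ((hE 0).2 0).2
  have hv : ∀ t x, |v t x| ≤ √E := fun t x => Real.abs_le_sqrt ((hE t).2 x).2
  have hu : ∀ t x, (u t x).re ^ 2 + (u t x).im ^ 2 ≤ √E ^ 2 := fun t x => by
    rw [Real.sq_sqrt hE₀, ← sq_norm_eq_re_sq_add_im_sq]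
    exact ((hE t).2 x).1
  have hB : 0 < min (-3 * α) (-4 * γ) := lt_min (by linarith) (by linarith)
  refine ⟨_, _, _, _, _, _, (min (-3 * α) (-4 * γ))⁻¹,
    h.isRealSKdVSolution.isCoerciveConservationLaw hα.le hγ.le hv hu
    h.integrable_energyDensity fun t => (hE t).1, fun t x => ?_⟩
  have flux_ge := le_massFlux_add_momentumFlux (α := α) (β := β) (f := fun t x => (u t x).re)
    (g := fun t x => (u t x).im) hγ.le (hv t x) (hu t x)
  rw [h.spaceDeriv_re, h.spaceDeriv_im, ← sq_norm_eq_re_sq_add_im_sq] at flux_ge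
  rw [← div_eq_inv_mul, le_div_iff₀ hB]
  have kdv_le := mul_le_mul_of_nonneg_left (min_le_left (-3 * α) (-4 * γ)) (sq_nonneg (∂ₓ v t x))
  have schrodinger_le :=
    mul_le_mul_of_nonneg_left (min_le_right (-3 * α) (-4 * γ)) (sq_nonneg ‖∂ₓ u t x‖)
  linarith

end IsSKdVSolution

end RegularSolutions

section WeightedEstimate

theorem inv_logWeight_eq {t : ℝ} (ht : 1 < t) (p q : ℝ) :
    1 / (t ^ (1 - p) * Real.log t ^ (1 + q) * (t ^ p / Real.log t ^ q)) = powLog (-1) (-1) t := by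
  have ht₀ : 0 < t := one_pos.trans ht
  have hlog := Real.log_pos ht
  rw [powLog, Real.rpow_neg_one, Real.rpow_neg_one, Real.rpow_sub ht₀, Real.rpow_add hlog,
    Real.rpow_one, Real.rpow_one]
  field_simp

theorem neg_powLog_mul {t : ℝ} (ht : 1 < t) (p q l x : ℝ) :
    l⁻¹ * powLog (-p) q t * x = x / (l * (t ^ p / Real.log t ^ q)) := by
  rw [powLog, Real.rpow_neg (one_pos.trans ht).le]
  field_simp

/-- Powers of `log t` are absorbed by the power-like room between `p` and `2 / 3`, so their
exponents `q` and `r` are arbitrary. -/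
theorem skdv_weighted_derivative_estimate_general {α β γ : ℝ} (hα : α < 0) (hγ : γ < 0)
    {u : ℝ → ℝ → ℂ} {v : ℝ → ℝ → ℝ} (hsol : IsSKdVSolution α β γ u v) {p l : ℝ} (q r : ℝ)
    (hp : 0 < p) (hp' : p < 2 / 3) (hl : 0 < l) :
    ∫⁻ t in Ici 10, ENNReal.ofReal (powLog (-1) r t *
      ∫ x, (‖deriv (u t) x‖ ^ 2 + deriv (v t) x ^ 2) *
        (1 / Real.cosh (x / (l * (t ^ p / Real.log t ^ q))))) < ⊤ := by
  obtain ⟨m, S, P, e, A, E, B, hm, hP⟩ := hsol.exists_isCoerciveConservationLaw hα hγ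
  obtain ⟨b, k, κ, hs⟩ := exists_isVirialScaling (r - q) q hp hp' (inv_pos.2 hl)
  set D : ℝ → ℝ → ℝ := fun t x => ‖∂ₓ u t x‖ ^ 2 + ∂ₓ v t x ^ 2
  have hD₀ : ∀ t x, 0 ≤ D t x := fun t x => by positivity
  have sech_nonneg : ∀ z, 0 ≤ 1 / Real.cosh z := fun z => (one_div_pos.2 (Real.cosh_pos z)).le
  have hbound : ∀ t x z, D t x * (1 / Real.cosh z) ≤ B * 4 * (P t x * lorentzian z) :=
    fun t x z => calc
      D t x * (1 / Real.cosh z) ≤ B * P t x * (4 * lorentzian z) :=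
        mul_le_mul (hP t x) ((one_div _).trans_le (inv_cosh_le_lorentzian z)) (sech_nonneg z)
          ((hD₀ t x).trans (hP t x))
      _ = B * 4 * (P t x * lorentzian z) := by ring
  have main := hm.lintegral_lt_top_of_le hs (T' := 10) (C := l * (B * 4)) (by norm_num)
    (G := fun t x => l * (D t x * (1 / Real.cosh (l⁻¹ * powLog (-p) q t * x))))
    (fun t _ x => mul_nonneg hl.le (mul_nonneg (hD₀ t x) (sech_nonneg _)))
    (fun t _ x => (mul_le_mul_of_nonneg_left (hbound t x _) hl.le).trans_eq (mul_assoc _ _ _).symm)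
  refine (setLIntegral_congr_fun measurableSet_Ici fun t ht => ?_).trans_lt main
  have ht₁ : 1 < t := by linarith [mem_Ici.1 ht]
  have amplitude : powLog (p - 1) (r - q) t * (l⁻¹ * powLog (-p) q t) * l = powLog (-1) r t := by
    rw [mul_left_comm, powLog_mul_powLog ht₁, mul_right_comm, inv_mul_cancel₀ hl.ne', one_mul]
    ring_nf
  simp only [neg_powLog_mul ht₁, integral_const_mul]
  rw [← amplitude, mul_assoc]
  rfl

end WeightedEstimate

/-- The key space-time weighted estimate for the `L²` masses of `∂ₓu` and `∂ₓv`: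
    with `λ₁(t) = t^{p₁}/(log t)^{q₁}` and `η(t) = t^{1-p₁} (log t)^{1+q₁}`, the double
    integral of `(|∂ₓu|² + (∂ₓv)²) sech(x/(l λ₁)) / (η λ₁)` is finite. -/
theorem skdv_weighted_derivative_estimate (α β γ : ℝ) (hα : α < 0) (hγ : γ < 0)
    (u : ℝ → ℝ → ℂ) (v : ℝ → ℝ → ℝ) (hsol : IsSKdVSolution α β γ u v)
    (p₁ q₁ p₂ : ℝ) (hq₁ : 0 < q₁) (hp₂ : 1 < p₂)
    (hp₁ : 0 < p₁) (hp₁' : p₁ ≤ 2 / (p₂ + 2))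
    (lam₁ η : ℝ → ℝ)
    (hlam₁ : ∀ t, lam₁ t = t ^ p₁ / Real.log t ^ q₁)
    (hη : ∀ t, η t = t ^ (1 - p₁) * Real.log t ^ (1 + q₁))
    (l : ℝ) (hl : 0 < l) :
    ∫⁻ t in Set.Ici (10 : ℝ),
        ENNReal.ofReal ((1 / (η t * lam₁ t)) *
          ∫ x : ℝ, (‖deriv (u t) x‖ ^ 2 + (deriv (v t) x) ^ 2) *
            (1 / Real.cosh (x / (l * lam₁ t)))) < ⊤ := by
  have hp : p₁ < 2 / 3 := hp₁'.trans_lt (by gcongr; linarith)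
  simp only [hlam₁, hη]
  rw [setLIntegral_congr_fun measurableSet_Ici fun t (ht : 10 ≤ t) => by
    rw [inv_logWeight_eq (by linarith) p₁ q₁]]
  exact skdv_weighted_derivative_estimate_general hα hγ hsol q₁ (-1) hp₁ hp hl
end

section
/- Let φ(x) = (2/π)·arctan(eˣ). Then φ is three times differentiable on ℝ and its third derivative satisfies |φ'''(x)| ≤ φ'(x) for every x ∈ ℝ, where φ'(x) = 1/(π·cosh x). -/
/-!
The derivative of `φ` is `s / π` with `s = 1 / cosh`, and differentiating `s` twice gives
`s'' = s - 2 s³`. Since `0 < s ≤ 1`, we have `0 ≤ s³ ≤ s`, and therefore `-s ≤ s'' ≤ s`.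
-/

section

open Real

theorem hasDerivAt_arctan_exp (x : ℝ) :
    HasDerivAt (fun y => arctan (exp y)) (2 * cosh x)⁻¹ x := by
  have hderiv : 1 / (1 + exp x ^ 2) * exp x = (2 * cosh x)⁻¹ := by
    rw [cosh_eq, exp_neg]
    field_simp
    ring
  exact hderiv ▸ (hasDerivAt_exp x).arctan

theorem hasDerivAt_inv_cosh (x : ℝ) :
    HasDerivAt (fun y => (cosh y)⁻¹) (-sinh x / cosh x ^ 2) x :=
  (hasDerivAt_cosh x).fun_inv (cosh_pos x).ne'

theorem hasDerivAt_neg_sinh_div_cosh_sq (x : ℝ) :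
    HasDerivAt (fun y => -sinh y / cosh y ^ 2) ((cosh x)⁻¹ - 2 * (cosh x)⁻¹ ^ 3) x := by
  have hcosh : cosh x ≠ 0 := (cosh_pos x).ne'
  refine ((hasDerivAt_sinh x).fun_neg.fun_div ((hasDerivAt_cosh x).fun_pow 2)
    (pow_ne_zero 2 hcosh)).congr_deriv ?_
  field_simp
  linear_combination 2 * cosh x * sinh_sq x

theorem iteratedDeriv_two_inv_cosh (x : ℝ) :
    iteratedDeriv 2 (fun y => (cosh y)⁻¹) x = (cosh x)⁻¹ - 2 * (cosh x)⁻¹ ^ 3 := by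
  rw [iteratedDeriv_succ', iteratedDeriv_one, funext fun y => (hasDerivAt_inv_cosh y).deriv]
  exact (hasDerivAt_neg_sinh_div_cosh_sq x).deriv

theorem abs_iteratedDeriv_two_inv_cosh_le (x : ℝ) :
    |iteratedDeriv 2 (fun y => (cosh y)⁻¹) x| ≤ (cosh x)⁻¹ := by
  have hnonneg : 0 ≤ (cosh x)⁻¹ := (inv_pos.2 (cosh_pos x)).le
  have hle_one : (cosh x)⁻¹ ≤ 1 := inv_le_one_of_one_le₀ (one_le_cosh x)
  have hcube_nonneg : 0 ≤ (cosh x)⁻¹ ^ 3 := pow_nonneg hnonneg 3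
  have hcube_le : (cosh x)⁻¹ ^ 3 ≤ (cosh x)⁻¹ := pow_le_of_le_one hnonneg hle_one three_ne_zero
  rw [iteratedDeriv_two_inv_cosh, abs_le]
  constructor <;> linarith

end

/-- `φ(x) = (2/π) arctan(eˣ)` is three times differentiable and its third derivative
    satisfies `|φ'''(x)| ≤ φ'(x) = 1/(π cosh x)` for every `x`. -/
theorem phi_third_deriv_bound :
    ContDiff ℝ 3 (fun y : ℝ => (2 / Real.pi) * Real.arctan (Real.exp y)) ∧
    (∀ x : ℝ,
      |iteratedDeriv 3 (fun y : ℝ => (2 / Real.pi) * Real.arctan (Real.exp y)) x|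
        ≤ 1 / (Real.pi * Real.cosh x)) := by
  refine ⟨contDiff_const.mul Real.contDiff_exp.arctan, fun x => ?_⟩
  have hderiv : deriv (fun y : ℝ => (2 / Real.pi) * Real.arctan (Real.exp y)) =
      fun y => Real.pi⁻¹ * (Real.cosh y)⁻¹ := by
    funext y
    rw [((hasDerivAt_arctan_exp y).const_mul _).deriv]
    field_simp
  calc
    _ = |Real.pi⁻¹ * iteratedDeriv 2 (fun y => (Real.cosh y)⁻¹) x| := by
      rw [iteratedDeriv_succ', hderiv, iteratedDeriv_const_mul_field]
    _ = Real.pi⁻¹ * |iteratedDeriv 2 (fun y => (Real.cosh y)⁻¹) x| := by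
      rw [abs_mul, abs_of_pos (inv_pos.2 Real.pi_pos)]
    _ ≤ Real.pi⁻¹ * (Real.cosh x)⁻¹ :=
      mul_le_mul_of_nonneg_left (abs_iteratedDeriv_two_inv_cosh_le x) (inv_pos.2 Real.pi_pos).le
    _ = 1 / (Real.pi * Real.cosh x) := by rw [one_div, mul_inv]
end

section
/- Let q₁ > 0, p₂ > 1 and 0 < p₁ ≤ 2/(p₂+2), and define λ₁(t) = t^{p₁}/(log t)^{q₁}, λ₂(t) = λ₁(t)^{p₂} and η(t) = t^{1−p₁}·(log t)^{1+q₁} for t > 1. Then the function t ↦ |η'(t)|·λ₂(t)^{1/2}/η(t)² is integrable on [e², ∞), where η' denotes the derivative of η. -/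
open MeasureTheory

/-!
All functions involved belong to the scale `t ^ s * log t ^ b`. On this scale `|η'| * w / η ^ 2` is
the absolute value of a combination of two such functions with the same power of `t`, and whether
they are integrable at infinity is decided by Bertrand's criterion, whose critical power is `t⁻¹`.
Here the power of `t` is `p₁ * (p₂ + 2) / 2 - 2`, and the larger power of `log t` is
`-1 - q₁ * (p₂ + 2) / 2`. At the endpoint `p₁ = 2 / (p₂ + 2)` the former is critical and the latter
decides.
-/

open Set Filter

theorem hasDerivAt_rpow_mul_log_rpow {t : ℝ} (ht : Real.log t ≠ 0) (s b : ℝ) :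
    HasDerivAt (fun x : ℝ => x ^ s * Real.log x ^ b)
      (t ^ (s - 1) * (s * Real.log t ^ b + b * Real.log t ^ (b - 1))) t := by
  have ht₀ : t ≠ 0 := (Real.log_ne_zero.1 ht).1
  refine ((Real.hasDerivAt_rpow_const (.inl ht₀)).mul
    ((Real.hasDerivAt_log ht₀).rpow_const (.inl ht))).congr_deriv ?_
  rw [Real.rpow_sub_one ht₀]
  ring

theorem integrableOn_Ioi_rpow_mul_log_rpow_of_lt {a s : ℝ} (ha : 1 < a) (hs : s < -1) (b : ℝ) :
    IntegrableOn (fun t : ℝ => t ^ s * Real.log t ^ b) (Ioi a) := by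
  obtain ⟨r, hsr, hr⟩ := exists_between hs
  have hcont : ContinuousOn (fun t : ℝ => t ^ s * Real.log t ^ b) (Ici a) := fun t ht =>
    (hasDerivAt_rpow_mul_log_rpow (Real.log_pos (ha.trans_le ht)).ne' s b).continuousAt
      |>.continuousWithinAt
  have hdom : (fun t : ℝ => t ^ s * Real.log t ^ b) =O[atTop] fun t : ℝ => t ^ r := by
    refine ((Asymptotics.isBigO_refl (fun t : ℝ => t ^ s) atTop).mul
      (isLittleO_log_rpow_rpow_atTop b (sub_pos.2 hsr)).isBigO).congr' .rfl ?_
    filter_upwards [eventually_gt_atTop 0] with t ht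
    rw [← Real.rpow_add ht, add_sub_cancel]
  exact ((hcont.locallyIntegrableOn measurableSet_Ici).integrableOn_of_isBigO_atTop hdom
    ⟨Ioi a, Ioi_mem_atTop a, integrableOn_Ioi_rpow_of_lt hr (by linarith)⟩).mono_set
      Ioi_subset_Ici_self

theorem integrableOn_Ioi_inv_mul_log_rpow_iff {a b : ℝ} (ha : 1 < a) :
    IntegrableOn (fun t : ℝ => t⁻¹ * Real.log t ^ b) (Ioi a) ↔ b < -1 :=
  (integrableOn_comp_log_Ioi (fun x : ℝ => x ^ b) (by linarith)).trans
    (integrableOn_Ioi_rpow_iff (Real.log_pos ha))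

theorem integrableOn_Ioi_rpow_mul_log_rpow {a s b : ℝ} (ha : 1 < a)
    (h : s < -1 ∨ s = -1 ∧ b < -1) :
    IntegrableOn (fun t : ℝ => t ^ s * Real.log t ^ b) (Ioi a) := by
  rcases h with hs | ⟨rfl, hb⟩
  · exact integrableOn_Ioi_rpow_mul_log_rpow_of_lt ha hs b
  · simpa only [Real.rpow_neg_one] using (integrableOn_Ioi_inv_mul_log_rpow_iff ha).2 hb

theorem abs_deriv_rpow_mul_log_rpow_mul_div_sq {t : ℝ} (ht : 1 < t) (α β γ δ : ℝ) :
    |deriv (fun x : ℝ => x ^ α * Real.log x ^ β) t| * (t ^ γ * Real.log t ^ δ)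
        / (t ^ α * Real.log t ^ β) ^ 2 =
      |α * (t ^ (γ - α - 1) * Real.log t ^ (δ - β))
        + β * (t ^ (γ - α - 1) * Real.log t ^ (δ - β - 1))| := by
  have ht₀ : 0 < t := by linarith
  have hlog : 0 < Real.log t := Real.log_pos ht
  have hw : 0 ≤ t ^ γ * Real.log t ^ δ / (t ^ α * Real.log t ^ β) ^ 2 := by positivity
  rw [(hasDerivAt_rpow_mul_log_rpow hlog.ne' α β).deriv, mul_div_assoc, ← abs_of_nonneg hw,
    ← abs_mul]
  congr 1
  simp only [Real.rpow_sub ht₀, Real.rpow_sub hlog, Real.rpow_one]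
  field_simp

theorem integrableOn_Ioi_abs_deriv_rpow_mul_log_rpow_mul_div_sq {a α β γ δ : ℝ} (ha : 1 < a)
    (h : γ < α ∨ γ = α ∧ δ < β - 1) :
    IntegrableOn (fun t : ℝ => |deriv (fun x : ℝ => x ^ α * Real.log x ^ β) t|
      * (t ^ γ * Real.log t ^ δ) / (t ^ α * Real.log t ^ β) ^ 2) (Ioi a) := by
  have hα : IntegrableOn (fun t : ℝ => t ^ (γ - α - 1) * Real.log t ^ (δ - β)) (Ioi a) :=
    integrableOn_Ioi_rpow_mul_log_rpow ha (by grind)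
  have hβ : IntegrableOn (fun t : ℝ => t ^ (γ - α - 1) * Real.log t ^ (δ - β - 1)) (Ioi a) :=
    integrableOn_Ioi_rpow_mul_log_rpow ha (by grind)
  exact IntegrableOn.congr_fun ((hα.const_mul α).add (hβ.const_mul β)).abs
    (fun t ht => (abs_deriv_rpow_mul_log_rpow_mul_div_sq (ha.trans ht) α β γ δ).symm)
    measurableSet_Ioi

theorem rpow_div_log_rpow_rpow {t : ℝ} (ht : 1 ≤ t) (p q r : ℝ) :
    (t ^ p / Real.log t ^ q) ^ r = t ^ (p * r) * Real.log t ^ (-(q * r)) := by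
  have ht₀ : 0 ≤ t := by linarith
  have hlog : 0 ≤ Real.log t := Real.log_nonneg ht
  rw [Real.div_rpow (by positivity) (by positivity), ← Real.rpow_mul ht₀, ← Real.rpow_mul hlog,
    Real.rpow_neg hlog, div_eq_mul_inv]

theorem eta_deriv_lam2_sqrt_integrable_general {p₁ q₁ p₂ a : ℝ} (ha : 1 < a)
    (h : p₁ * (p₂ + 2) < 2 ∨ p₁ * (p₂ + 2) = 2 ∧ 0 < q₁ * (p₂ + 2))
    {lam₁ lam₂ η : ℝ → ℝ}
    (hlam₁ : ∀ t, lam₁ t = t ^ p₁ / Real.log t ^ q₁)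
    (hlam₂ : ∀ t, lam₂ t = lam₁ t ^ p₂)
    (hη : ∀ t, η t = t ^ (1 - p₁) * Real.log t ^ (1 + q₁)) :
    IntegrableOn (fun t => |deriv η t| * lam₂ t ^ ((1 : ℝ) / 2) / (η t) ^ 2) (Ici a) := by
  obtain rfl : η = fun t => t ^ (1 - p₁) * Real.log t ^ (1 + q₁) := funext hη
  have hsqrt : ∀ t ∈ Ioi a,
      lam₂ t ^ ((1 : ℝ) / 2) = t ^ (p₁ * (p₂ / 2)) * Real.log t ^ (-(q₁ * (p₂ / 2))) := by
    intro t ht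
    have ht₁ : 1 ≤ t := (ha.trans ht).le
    have hlam₁_nonneg : 0 ≤ lam₁ t := by
      have := Real.log_nonneg ht₁
      rw [hlam₁]
      positivity
    rw [hlam₂, ← Real.rpow_mul hlam₁_nonneg, mul_one_div, hlam₁, rpow_div_log_rpow_rpow ht₁]
  rw [integrableOn_Ici_iff_integrableOn_Ioi]
  refine (integrableOn_congr_fun (fun t ht => by rw [hsqrt t ht]) measurableSet_Ioi).2
    (integrableOn_Ioi_abs_deriv_rpow_mul_log_rpow_mul_div_sq ha ?_)
  exact h.imp (fun _ => by linarith) (fun ⟨_, _⟩ => ⟨by linarith, by linarith⟩)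

/-- For `q₁ > 0`, `p₂ > 1`, `0 < p₁ ≤ 2/(p₂+2)`, with `λ₁(t) = t^{p₁}/(log t)^{q₁}`,
    `λ₂ = λ₁^{p₂}` and `η(t) = t^{1-p₁} (log t)^{1+q₁}`, the function
    `|η'| λ₂^{1/2} / η²` is integrable on `[e², ∞)`. -/
theorem eta_deriv_lam2_sqrt_integrable (p₁ q₁ p₂ : ℝ)
    (hq₁ : 0 < q₁) (hp₂ : 1 < p₂) (hp₁ : 0 < p₁) (hp₁' : p₁ ≤ 2 / (p₂ + 2))
    (lam₁ lam₂ η : ℝ → ℝ)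
    (hlam₁ : ∀ t, lam₁ t = t ^ p₁ / Real.log t ^ q₁)
    (hlam₂ : ∀ t, lam₂ t = lam₁ t ^ p₂)
    (hη : ∀ t, η t = t ^ (1 - p₁) * Real.log t ^ (1 + q₁)) :
    IntegrableOn (fun t => |deriv η t| * lam₂ t ^ ((1 : ℝ) / 2) / (η t) ^ 2)
      (Set.Ici (Real.exp 2)) := by
  have hp : p₁ * (p₂ + 2) ≤ 2 := (le_div_iff₀ (by linarith)).1 hp₁'
  exact eta_deriv_lam2_sqrt_integrable_general (Real.one_lt_exp_iff.2 two_pos)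
    (hp.lt_or_eq.imp_right fun h => ⟨h, mul_pos hq₁ (by linarith)⟩) hlam₁ hlam₂ hη
end

section
/- For every l > 0 there exists a constant C > 0 such that for every λ ≥ 1 and every continuously differentiable function f: ℝ → ℂ with f and f' both in L²(ℝ), one has ∫_ℝ |f(x)|⁶ · sech(x/(l·λ)) dx ≤ C · (∫_ℝ |f(x)|² dx)² · ∫_ℝ ( |f'(x)|² + |f(x)|² ) · sech(x/(l·λ)) dx. -/
/-!
Write `w` for the weight and `A = ∫ ‖f‖²`, `G = (‖f'‖² + ‖f‖²) w`. Since `‖f‖⁶ w = u² ‖f‖²` with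
`u = ‖f‖² √w`, it suffices to bound `u²` uniformly by a multiple of `A ∫ G`. As `u` vanishes at
`-∞`, `|u| ≤ ∫ |u'|`. A weight with `|w'| ≤ k w` varies slowly enough that `u'² ≤ (4 + k²/4) ‖f‖² G`
pointwise, and Cauchy–Schwarz concludes. The weight `sech (x / (l λ))` has logarithmic derivative
`-tanh (x / (l λ)) / (l λ)`, bounded by `1 / l` uniformly in `λ ≥ 1`.
-/

open MeasureTheory

section CauchySchwarz

variable {α F : Type*} [MeasurableSpace α] {μ : Measure α} [NormedAddCommGroup F]
  {v : α → F} {p q : α → ℝ}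

lemma integrable_of_norm_sq_le_mul (hv : AEStronglyMeasurable v μ)
    (hp : Integrable p μ) (hq : Integrable q μ) (hp0 : 0 ≤ᵐ[μ] p) (hq0 : 0 ≤ᵐ[μ] q)
    (hvpq : ∀ᵐ x ∂μ, ‖v x‖ ^ 2 ≤ p x * q x) : Integrable v μ := by
  refine (hp.add hq).mono' hv ?_
  filter_upwards [hp0, hq0, hvpq] with x hpx hqx hx
  refine le_of_sq_le_sq ?_ (add_nonneg hpx hqx)
  calc ‖v x‖ ^ 2 ≤ p x * q x := hx
    _ ≤ (p x + q x) ^ 2 := by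
      have hpq : 0 ≤ p x * q x := mul_nonneg hpx hqx
      linarith [sq_nonneg (p x), sq_nonneg (q x)]

lemma sq_integral_norm_le_of_norm_sq_le_mul (hv : AEStronglyMeasurable v μ)
    (hp : Integrable p μ) (hq : Integrable q μ) (hp0 : 0 ≤ᵐ[μ] p) (hq0 : 0 ≤ᵐ[μ] q)
    (hvpq : ∀ᵐ x ∂μ, ‖v x‖ ^ 2 ≤ p x * q x) :
    (∫ x, ‖v x‖ ∂μ) ^ 2 ≤ (∫ x, p x ∂μ) * ∫ x, q x ∂μ := by
  have hv_int : Integrable v μ := integrable_of_norm_sq_le_mul hv hp hq hp0 hq0 hvpq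
  have pointwise (t : ℝ) : ∀ᵐ x ∂μ, t * (2 * ‖v x‖) ≤ t ^ 2 * p x + q x := by
    filter_upwards [hp0, hq0, hvpq] with x hpx hqx hx
    refine le_of_sq_le_sq ?_ (add_nonneg (mul_nonneg (sq_nonneg t) hpx) hqx)
    calc (t * (2 * ‖v x‖)) ^ 2 = 4 * t ^ 2 * ‖v x‖ ^ 2 := by ring
      _ ≤ 4 * t ^ 2 * (p x * q x) := by gcongr
      _ ≤ (t ^ 2 * p x + q x) ^ 2 := by linarith [sq_nonneg (t ^ 2 * p x - q x)]
  have quadratic_nonneg (t : ℝ) :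
      0 ≤ (∫ x, p x ∂μ) * (t * t) + (-(2 * ∫ x, ‖v x‖ ∂μ)) * t + ∫ x, q x ∂μ := by
    have h : ∫ x, t * (2 * ‖v x‖) ∂μ ≤ ∫ x, (t ^ 2 * p x + q x) ∂μ :=
      integral_mono_ae ((hv_int.norm.const_mul 2).const_mul t) ((hp.const_mul (t ^ 2)).add hq)
        (pointwise t)
    rw [integral_const_mul, integral_const_mul, integral_add (hp.const_mul _) hq,
      integral_const_mul] at h
    linarith
  have h := discrim_le_zero quadratic_nonneg
  rw [discrim] at h
  linarith

end CauchySchwarz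

lemma norm_le_integral_norm_deriv {F : Type*} [NormedAddCommGroup F] [NormedSpace ℝ F]
    [CompleteSpace F] {u : ℝ → F} (hu : Differentiable ℝ u) (hu_int : Integrable u)
    (hu'_int : Integrable (deriv u)) (x : ℝ) : ‖u x‖ ≤ ∫ y, ‖deriv u y‖ := by
  have hderiv : ∀ y ∈ Set.Iic x, HasDerivAt u (deriv u y) y := fun y _ ↦ (hu y).hasDerivAt
  have hlim := tendsto_zero_of_hasDerivAt_of_integrableOn_Iic hderiv
    hu'_int.integrableOn hu_int.integrableOn
  have hFTC : ∫ y in Set.Iic x, deriv u y = u x - 0 :=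
    integral_Iic_of_hasDerivAt_of_tendsto' hderiv hu'_int.integrableOn hlim
  calc ‖u x‖ = ‖∫ y in Set.Iic x, deriv u y‖ := by rw [hFTC, sub_zero]
    _ ≤ ∫ y in Set.Iic x, ‖deriv u y‖ := norm_integral_le_integral_norm _
    _ ≤ ∫ y, ‖deriv u y‖ :=
        setIntegral_le_integral hu'_int.norm (ae_of_all _ fun _ ↦ norm_nonneg _)

lemma sq_le_integral_mul_integral_of_sq_deriv_le_mul {u p q r : ℝ → ℝ} (hu : Differentiable ℝ u)
    (hp : Integrable p) (hq : Integrable q) (hr : Integrable r)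
    (hp0 : 0 ≤ᵐ[volume] p) (hq0 : 0 ≤ᵐ[volume] q) (hr0 : 0 ≤ᵐ[volume] r)
    (hupq : ∀ᵐ x, u x ^ 2 ≤ p x * q x) (hu'pr : ∀ᵐ x, deriv u x ^ 2 ≤ p x * r x) (x : ℝ) :
    u x ^ 2 ≤ (∫ y, p y) * ∫ y, r y := by
  simp only [← sq_abs (u _), ← sq_abs (deriv u _), ← Real.norm_eq_abs] at hupq hu'pr ⊢
  have hu'_meas : AEStronglyMeasurable (deriv u) := (measurable_deriv u).aestronglyMeasurable
  have hu_int : Integrable u :=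
    integrable_of_norm_sq_le_mul hu.continuous.aestronglyMeasurable hp hq hp0 hq0 hupq
  have hu'_int : Integrable (deriv u) :=
    integrable_of_norm_sq_le_mul hu'_meas hp hr hp0 hr0 hu'pr
  calc ‖u x‖ ^ 2 ≤ (∫ y, ‖deriv u y‖) ^ 2 := by
        gcongr; exact norm_le_integral_norm_deriv hu hu_int hu'_int x
    _ ≤ (∫ y, p y) * ∫ y, r y :=
        sq_integral_norm_le_of_norm_sq_le_mul hu'_meas hp hr hp0 hr0 hu'pr

section Weighted

variable {E : Type*} [NormedAddCommGroup E] [InnerProductSpace ℝ E]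
  {f : ℝ → E} {w : ℝ → ℝ} {k : ℝ}

lemma hasDerivAt_norm_sq_mul_sqrt {f' : E} {w' x : ℝ} (hf : HasDerivAt f f' x)
    (hw : HasDerivAt w w' x) (hwx : w x ≠ 0) :
    HasDerivAt (fun y ↦ ‖f y‖ ^ 2 * √(w y))
      (2 * inner ℝ (f x) f' * √(w x) + ‖f x‖ ^ 2 * (w' / (2 * √(w x)))) x :=
  hf.norm_sq.mul (hw.sqrt hwx)

lemma sq_two_mul_inner_add_le (a b : E) {m c : ℝ} (hm : |m| ≤ c) :
    (2 * inner ℝ a b + ‖a‖ ^ 2 * m) ^ 2 ≤ ‖a‖ ^ 2 * ((4 + c ^ 2) * (‖b‖ ^ 2 + ‖a‖ ^ 2)) := by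
  have habs : |2 * inner ℝ a b + ‖a‖ ^ 2 * m| ≤ ‖a‖ * (2 * ‖b‖ + ‖a‖ * c) :=
    calc |2 * inner ℝ a b + ‖a‖ ^ 2 * m| ≤ 2 * |inner ℝ a b| + ‖a‖ ^ 2 * |m| := by
          refine (abs_add_le _ _).trans_eq ?_
          rw [abs_mul, abs_mul, abs_two, abs_of_nonneg (sq_nonneg ‖a‖)]
      _ ≤ 2 * (‖a‖ * ‖b‖) + ‖a‖ ^ 2 * c := by gcongr; exact abs_real_inner_le_norm a b
      _ = ‖a‖ * (2 * ‖b‖ + ‖a‖ * c) := by ring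
  calc (2 * inner ℝ a b + ‖a‖ ^ 2 * m) ^ 2 ≤ (‖a‖ * (2 * ‖b‖ + ‖a‖ * c)) ^ 2 := by
        rw [← sq_abs]; gcongr
    _ = ‖a‖ ^ 2 * (2 * ‖b‖ + c * ‖a‖) ^ 2 := by ring
    _ ≤ ‖a‖ ^ 2 * ((4 + c ^ 2) * (‖b‖ ^ 2 + ‖a‖ ^ 2)) := by
        gcongr
        linarith [sq_nonneg (c * ‖b‖ - 2 * ‖a‖)]

lemma sq_deriv_norm_sq_mul_sqrt_le {x : ℝ} (hf : DifferentiableAt ℝ f x)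
    (hw : DifferentiableAt ℝ w x) (hwx : 0 < w x) (hkw : |deriv w x| ≤ k * w x) :
    deriv (fun y ↦ ‖f y‖ ^ 2 * √(w y)) x ^ 2
      ≤ ‖f x‖ ^ 2 * ((4 + k ^ 2 / 4) * ((‖deriv f x‖ ^ 2 + ‖f x‖ ^ 2) * w x)) := by
  have hsqrt : √(w x) ^ 2 = w x := Real.sq_sqrt hwx.le
  have hsqrt_pos : 0 < √(w x) := Real.sqrt_pos.2 hwx
  have hlog : |deriv w x / (2 * w x)| ≤ k / 2 := by
    rw [abs_div, abs_of_pos (by positivity : 0 < 2 * w x), div_le_div_iff₀ (by positivity) two_pos]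
    linarith
  have hfactor : 2 * inner ℝ (f x) (deriv f x) * √(w x)
        + ‖f x‖ ^ 2 * (deriv w x / (2 * √(w x)))
      = (2 * inner ℝ (f x) (deriv f x) + ‖f x‖ ^ 2 * (deriv w x / (2 * w x))) * √(w x) := by
    rw [← hsqrt, Real.sqrt_sq hsqrt_pos.le]
    field_simp
  rw [(hasDerivAt_norm_sq_mul_sqrt hf.hasDerivAt hw.hasDerivAt hwx.ne').deriv, hfactor, mul_pow,
    hsqrt]
  calc _ ≤ ‖f x‖ ^ 2 * ((4 + (k / 2) ^ 2) * (‖deriv f x‖ ^ 2 + ‖f x‖ ^ 2)) * w x := by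
        gcongr; exact sq_two_mul_inner_add_le _ _ hlog
    _ = _ := by ring

lemma norm_pow_four_mul_weight_le (hf : Differentiable ℝ f) (hw : Differentiable ℝ w)
    (hw_pos : ∀ x, 0 < w x) (hkw : ∀ x, |deriv w x| ≤ k * w x)
    (hf_int : Integrable fun x ↦ ‖f x‖ ^ 2)
    (hfw_int : Integrable fun x ↦ (‖deriv f x‖ ^ 2 + ‖f x‖ ^ 2) * w x) (x : ℝ) :
    ‖f x‖ ^ 4 * w x ≤ (4 + k ^ 2 / 4) * (∫ y, ‖f y‖ ^ 2) *
      ∫ y, (‖deriv f y‖ ^ 2 + ‖f y‖ ^ 2) * w y := by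
  have hu_sq (y : ℝ) : (‖f y‖ ^ 2 * √(w y)) ^ 2 = ‖f y‖ ^ 4 * w y := by
    rw [mul_pow, Real.sq_sqrt (hw_pos y).le]; ring
  have hu : Differentiable ℝ fun y ↦ ‖f y‖ ^ 2 * √(w y) := fun y ↦
    (hasDerivAt_norm_sq_mul_sqrt (hf y).hasDerivAt (hw y).hasDerivAt
      (hw_pos y).ne').differentiableAt
  have hu_le (y : ℝ) : (‖f y‖ ^ 2 * √(w y)) ^ 2
      ≤ ‖f y‖ ^ 2 * ((‖deriv f y‖ ^ 2 + ‖f y‖ ^ 2) * w y) :=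
    calc (‖f y‖ ^ 2 * √(w y)) ^ 2 = ‖f y‖ ^ 2 * (‖f y‖ ^ 2 * w y) := by rw [hu_sq]; ring
      _ ≤ ‖f y‖ ^ 2 * ((‖deriv f y‖ ^ 2 + ‖f y‖ ^ 2) * w y) := by
        have := hw_pos y
        gcongr
        exact le_add_of_nonneg_left (sq_nonneg _)
  have hG0 (y : ℝ) : 0 ≤ (‖deriv f y‖ ^ 2 + ‖f y‖ ^ 2) * w y :=
    mul_nonneg (by positivity) (hw_pos y).le
  calc ‖f x‖ ^ 4 * w x = (‖f x‖ ^ 2 * √(w x)) ^ 2 := (hu_sq x).symm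
    _ ≤ (∫ y, ‖f y‖ ^ 2) * ∫ y, (4 + k ^ 2 / 4) * ((‖deriv f y‖ ^ 2 + ‖f y‖ ^ 2) * w y) :=
      sq_le_integral_mul_integral_of_sq_deriv_le_mul hu hf_int hfw_int (hfw_int.const_mul _)
        (ae_of_all _ fun y ↦ sq_nonneg ‖f y‖) (ae_of_all _ hG0)
        (ae_of_all _ fun y ↦ mul_nonneg (by positivity) (hG0 y)) (ae_of_all _ hu_le)
        (ae_of_all _ fun y ↦ sq_deriv_norm_sq_mul_sqrt_le (hf y) (hw y) (hw_pos y) (hkw y)) x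
    _ = _ := by rw [integral_const_mul]; ring

theorem weighted_sixth_power_estimate_general (hf : Differentiable ℝ f) (hw : Differentiable ℝ w)
    (hw_pos : ∀ x, 0 < w x) (hkw : ∀ x, |deriv w x| ≤ k * w x)
    (hf_int : Integrable fun x ↦ ‖f x‖ ^ 2)
    (hfw_int : Integrable fun x ↦ (‖deriv f x‖ ^ 2 + ‖f x‖ ^ 2) * w x) :
    ∫ x, ‖f x‖ ^ 6 * w x ≤ (4 + k ^ 2 / 4) * (∫ x, ‖f x‖ ^ 2) ^ 2 *
      ∫ x, (‖deriv f x‖ ^ 2 + ‖f x‖ ^ 2) * w x := by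
  set M := (4 + k ^ 2 / 4) * (∫ x, ‖f x‖ ^ 2) * ∫ x, (‖deriv f x‖ ^ 2 + ‖f x‖ ^ 2) * w x with hM
  have hpointwise (x : ℝ) : ‖f x‖ ^ 6 * w x ≤ M * ‖f x‖ ^ 2 :=
    calc ‖f x‖ ^ 6 * w x = ‖f x‖ ^ 4 * w x * ‖f x‖ ^ 2 := by ring
      _ ≤ M * ‖f x‖ ^ 2 := by
        gcongr; exact norm_pow_four_mul_weight_le hf hw hw_pos hkw hf_int hfw_int x
  calc ∫ x, ‖f x‖ ^ 6 * w x ≤ ∫ x, M * ‖f x‖ ^ 2 :=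
        integral_mono_of_nonneg (ae_of_all _ fun x ↦ mul_nonneg (by positivity) (hw_pos x).le)
          (hf_int.const_mul M) (ae_of_all _ hpointwise)
    _ = _ := by rw [integral_const_mul, hM]; ring

end Weighted

lemma hasDerivAt_one_div_cosh_div (a x : ℝ) :
    HasDerivAt (fun y ↦ 1 / Real.cosh (y / a))
      (-(Real.tanh (x / a) / a) * (1 / Real.cosh (x / a))) x := by
  simp only [one_div]
  refine (((hasDerivAt_id' x).div_const a).cosh.fun_inv (Real.cosh_pos _).ne').congr_deriv ?_
  rw [Real.tanh_eq_sinh_div_cosh]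
  field_simp

lemma abs_deriv_one_div_cosh_div_le {l a : ℝ} (hl : 0 < l) (hla : l ≤ a) (x : ℝ) :
    |deriv (fun y ↦ 1 / Real.cosh (y / a)) x| ≤ 1 / l * (1 / Real.cosh (x / a)) := by
  have hcosh : 0 < 1 / Real.cosh (x / a) := one_div_pos.2 (Real.cosh_pos _)
  rw [(hasDerivAt_one_div_cosh_div a x).deriv, abs_mul, abs_neg, abs_div, abs_of_pos hcosh,
    abs_of_pos (hl.trans_le hla)]
  gcongr
  exact (Real.abs_tanh_lt_one _).le

lemma integrable_mul_one_div_cosh_div {μ : Measure ℝ} {g : ℝ → ℝ} (hg : Integrable g μ) (a : ℝ) :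
    Integrable (fun x ↦ g x * (1 / Real.cosh (x / a))) μ := by
  have hcont : Continuous fun x ↦ 1 / Real.cosh (x / a) :=
    continuous_iff_continuousAt.2 fun x ↦ (hasDerivAt_one_div_cosh_div a x).continuousAt
  refine hg.mul_bdd (c := 1) hcont.aestronglyMeasurable (ae_of_all _ fun x ↦ ?_)
  rw [Real.norm_of_nonneg (one_div_pos.2 (Real.cosh_pos _)).le]
  exact div_le_one_of_le₀ (Real.one_le_cosh _) (Real.cosh_pos _).le

/-- Weighted Gagliardo–Nirenberg-type estimate: for every `l > 0` there is `C > 0`,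
    independent of `λ ≥ 1` and of `f` with `f, f' ∈ L²(ℝ)`, such that
    `∫ |f|⁶ sech(x/(lλ)) ≤ C (∫|f|²)² ∫ (|f'|² + |f|²) sech(x/(lλ))`. -/
theorem weighted_sixth_power_estimate (l : ℝ) (hl : 0 < l) :
    ∃ C : ℝ, 0 < C ∧ ∀ lam : ℝ, 1 ≤ lam → ∀ f : ℝ → ℂ, ContDiff ℝ 1 f →
      Integrable (fun x : ℝ => ‖f x‖ ^ 2) →
      Integrable (fun x : ℝ => ‖deriv f x‖ ^ 2) →
      (∫ x : ℝ, ‖f x‖ ^ 6 * (1 / Real.cosh (x / (l * lam))))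
        ≤ C * (∫ x : ℝ, ‖f x‖ ^ 2) ^ 2 *
          ∫ x : ℝ, (‖deriv f x‖ ^ 2 + ‖f x‖ ^ 2) * (1 / Real.cosh (x / (l * lam))) :=
  ⟨4 + (1 / l) ^ 2 / 4, by positivity, fun lam hlam _f hf hf_int hf'_int ↦
    weighted_sixth_power_estimate_general (hf.differentiable one_ne_zero)
      (fun x ↦ (hasDerivAt_one_div_cosh_div (l * lam) x).differentiableAt)
      (fun _ ↦ one_div_pos.2 (Real.cosh_pos _))
      (abs_deriv_one_div_cosh_div_le hl (le_mul_of_one_le_right hl.le hlam)) hf_int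
      (integrable_mul_one_div_cosh_div (hf'_int.add hf_int) (l * lam))⟩
end
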